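/- (Local well-posedness of the parabolic regularized equation.) Let ε ∈ (0,1], let s ∈ ℕ with s ≥ 4, and let φ ∈ H^s(𝕋) be real-valued. Then there exist T > 0 (depending on ε, s and ‖φ‖_{H⁴}) and a unique real-valued u ∈ C([0,T]; H^s(𝕋)) satisfying ∂_t u + ε∂_x⁴u + γ₀∂_x⁵u + γ₁∂_x³u + γ₂∂_x u = N(∂_x³u,∂_x²u,∂_xu,u) on [0,T]×𝕋 (equivalently, the associated Duhamel integral equation u(t) = U_ε(t)φ + ∫₀^t U_ε(t−t')N(u(t')) dt', where U_ε(t) is the Fourier multiplier with symbol exp(−εtk⁴ − it(γ₀k⁵ − γ₁k³ + γ₂k))) with u(0,·) = φ. Moreover, the solution extends uniquely to a maximal interval [0,T_ε) on which u ∈ C([0,T_ε); H^s(𝕋)), and either T_ε = ∞ or liminf_{t→T_ε} ‖u(t)‖_{H⁴} = ∞. -/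

import Mathlib

/- Local well-posedness of the parabolic regularized fifth order equation
   ∂_t u + ε∂_x⁴u + γ₀∂_x⁵u + γ₁∂_x³u + γ₂∂_x u = N(∂_x³u,∂_x²u,∂_xu,u). -/

namespace FifthOrderStmt14

/-- Fourier coefficient of a `2π`-periodic function `f : ℝ → ℝ`:
`f̂(k) = (1/2π) ∫_0^{2π} f(x) e^{-ikx} dx`. -/
noncomputable def fc (f : ℝ → ℝ) (k : ℤ) : ℂ :=
  (Complex.ofReal (2 * Real.pi))⁻¹ *
    ∫ x in (0:ℝ)..(2 * Real.pi), (f x : ℂ) * Complex.exp (-Complex.I * (k : ℂ) * (x : ℂ))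

/-- Sobolev norm `‖f‖_{H^s} = (Σ_k (1+k²)^s |f̂(k)|²)^{1/2}`. -/
noncomputable def hsNorm (s : ℕ) (f : ℝ → ℝ) : ℝ :=
  Real.sqrt (∑' k : ℤ, (1 + (k : ℝ) ^ 2) ^ s * ‖fc f k‖ ^ 2)

/-- `f` belongs to `H^s(𝕋)` (continuous representative, `2π`-periodic, finite `H^s` norm). -/
def MemHs (s : ℕ) (f : ℝ → ℝ) : Prop :=
  Continuous f ∧ Function.Periodic f (2 * Real.pi) ∧
    Summable (fun k : ℤ => (1 + (k : ℝ) ^ 2) ^ s * ‖fc f k‖ ^ 2)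

/-- The nonlinearity `N(∂_x³f, ∂_x²f, ∂_xf, f) = Σ_j λ_j (∂_x³f)^{a_j}(∂_x²f)^{b_j}(∂_xf)^{c_j}f^{d_j}`. -/
noncomputable def Nfun (j0 : ℕ) (lam : Fin j0 → ℝ) (a b c d : Fin j0 → ℕ)
    (f : ℝ → ℝ) (x : ℝ) : ℝ :=
  ∑ j : Fin j0, lam j * (iteratedDeriv 3 f x) ^ (a j) * (iteratedDeriv 2 f x) ^ (b j) *
    (deriv f x) ^ (c j) * (f x) ^ (d j)

/-- The functional `P_N(f) = Σ_j (λ_j b_j / 2π) ∫_𝕋 (∂_x³f)^{a_j}(∂_x²f)^{b_j-1}(∂_xf)^{c_j}f^{d_j} dx`. -/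
noncomputable def PN (j0 : ℕ) (lam : Fin j0 → ℝ) (a b c d : Fin j0 → ℕ) (f : ℝ → ℝ) : ℝ :=
  ∑ j : Fin j0, (lam j * (b j : ℝ) / (2 * Real.pi)) *
    ∫ x in (0:ℝ)..(2 * Real.pi),
      (iteratedDeriv 3 f x) ^ (a j) * (iteratedDeriv 2 f x) ^ (b j - 1) *
        (deriv f x) ^ (c j) * (f x) ^ (d j)

/-- `u` is a (distributional) solution of the regularized equation
`∂_t u + ε∂_x⁴u + γ₀∂_x⁵u + γ₁∂_x³u + γ₂∂_x u = N(∂_x³u,∂_x²u,∂_xu,u)` on `[T₁,T₂] × 𝕋`.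
(The even-order term `ε∂_x⁴` picks up sign `+` under four integrations by parts, hence the
`- ε ∂_x⁴ψ` in the identity below.) -/
def IsSolutionReg (ε γ0 γ1 γ2 : ℝ) (j0 : ℕ) (lam : Fin j0 → ℝ) (a b c d : Fin j0 → ℕ)
    (T1 T2 : ℝ) (u : ℝ → ℝ → ℝ) : Prop :=
  (∀ t ∈ Set.Icc T1 T2, ContDiff ℝ 3 (u t) ∧ Function.Periodic (u t) (2 * Real.pi)) ∧
  ∀ ψ : ℝ → ℝ → ℝ, ContDiff ℝ (⊤ : ℕ∞) (Function.uncurry ψ) →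
    (∀ t : ℝ, Function.Periodic (ψ t) (2 * Real.pi)) →
    (∀ t : ℝ, t ∉ Set.Ioo T1 T2 → ∀ x : ℝ, ψ t x = 0) →
    (∫ t in T1..T2, ∫ x in (0:ℝ)..(2 * Real.pi),
      (u t x * (deriv (fun τ : ℝ => ψ τ x) t
        - ε * iteratedDeriv 4 (ψ t) x
        + γ0 * iteratedDeriv 5 (ψ t) x
        + γ1 * iteratedDeriv 3 (ψ t) x
        + γ2 * deriv (ψ t) x)
      + Nfun j0 lam a b c d (u t) x * ψ t x)) = 0

/-- `t ↦ u(t)` is continuous from `A` into `H^s(𝕋)`. -/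
def ContInHs (s : ℕ) (A : Set ℝ) (u : ℝ → ℝ → ℝ) : Prop :=
  ∀ t₀ ∈ A, ∀ ε > 0, ∃ δ > 0, ∀ t ∈ A, |t - t₀| < δ →
    hsNorm s (fun x => u t x - u t₀ x) < ε

section Wiener

open scoped ENNReal NNReal

/-- The weight `1 + |k|` on frequencies. -/
def wt (k : ℤ) : ℝ≥0 := 1 + ‖k‖₊

lemma one_le_wt (k : ℤ) : 1 ≤ wt k := by simp [wt]

lemma wt_pos (k : ℤ) : 0 < wt k := lt_of_lt_of_le one_pos (one_le_wt k)

lemma coe_wt (k : ℤ) : (wt k : ℝ) = 1 + |(k : ℝ)| := by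
  simp [wt, Int.norm_eq_abs]

lemma wt_add_le (m n : ℤ) : wt (m + n) ≤ wt m * wt n := by
  have h := nnnorm_add_le m n
  calc wt (m + n) ≤ 1 + (‖m‖₊ + ‖n‖₊) := by unfold wt; gcongr
    _ ≤ (1 + (‖m‖₊ + ‖n‖₊)) + ‖m‖₊ * ‖n‖₊ := le_self_add
    _ = wt m * wt n := by unfold wt; ring

variable {E : Type*} [NormedAddCommGroup E]

/-- The weighted `ℓ¹` norm `∑ (1 + |k|)^r ‖a k‖`. -/
noncomputable def wnorm (r : ℕ) (a : ℤ → E) : ℝ≥0∞ :=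
  ∑' k, (wt k : ℝ≥0∞) ^ r * ‖a k‖ₑ

lemma wnorm_mono_left {r r' : ℕ} (h : r ≤ r') (a : ℤ → E) : wnorm r a ≤ wnorm r' a := by
  refine ENNReal.tsum_le_tsum fun k => ?_
  gcongr
  exact_mod_cast one_le_wt k

lemma wnorm_ne_top_of_le {r r' : ℕ} (h : r ≤ r') {a : ℤ → E} (ha : wnorm r' a ≠ ⊤) :
    wnorm r a ≠ ⊤ := ne_top_of_le_ne_top ha (wnorm_mono_left h a)

lemma wnorm_add_le (r : ℕ) (a b : ℤ → E) : wnorm r (a + b) ≤ wnorm r a + wnorm r b := by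
  unfold wnorm
  rw [← ENNReal.tsum_add]
  refine ENNReal.tsum_le_tsum fun k => ?_
  rw [← mul_add]
  gcongr
  exact enorm_add_le _ _

lemma wnorm_neg (r : ℕ) (a : ℤ → E) : wnorm r (-a) = wnorm r a := by
  simp [wnorm]

lemma wnorm_sub_le (r : ℕ) (a b : ℤ → E) : wnorm r (a - b) ≤ wnorm r a + wnorm r b := by
  rw [sub_eq_add_neg, ← wnorm_neg r b]
  exact wnorm_add_le _ _ _

lemma wnorm_zero (r : ℕ) : wnorm r (0 : ℤ → E) = 0 := by simp [wnorm]

lemma wnorm_const_smul {𝕜 : Type*} [NormedField 𝕜] [NormedSpace 𝕜 E] (r : ℕ) (c : 𝕜) (a : ℤ → E) :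
    wnorm r (c • a) = ‖c‖ₑ * wnorm r a := by
  unfold wnorm
  rw [← ENNReal.tsum_mul_left]
  refine tsum_congr fun k => ?_
  rw [Pi.smul_apply, enorm_smul]
  ring

lemma enorm_le_wnorm (r : ℕ) (a : ℤ → E) (k : ℤ) : ‖a k‖ₑ ≤ wnorm r a := by
  calc ‖a k‖ₑ ≤ (wt k : ℝ≥0∞) ^ r * ‖a k‖ₑ :=
        le_mul_of_one_le_left zero_le (one_le_pow₀ (by exact_mod_cast one_le_wt k))
    _ ≤ wnorm r a := ENNReal.le_tsum (f := fun k => (wt k : ℝ≥0∞) ^ r * ‖a k‖ₑ) k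

lemma wnorm_sum_le {ι : Type*} (s : Finset ι) (r : ℕ) (a : ι → ℤ → E) :
    wnorm r (∑ i ∈ s, a i) ≤ ∑ i ∈ s, wnorm r (a i) := by
  classical
  induction s using Finset.induction_on with
  | empty => simp [wnorm_zero]
  | insert i s hi ih =>
    rw [Finset.sum_insert hi, Finset.sum_insert hi]
    exact (wnorm_add_le _ _ _).trans (by gcongr)

lemma wnorm_ne_top_iff {r : ℕ} {a : ℤ → E} :
    wnorm r a ≠ ⊤ ↔ Summable fun k => (wt k : ℝ) ^ r * ‖a k‖ := by
  have h : wnorm r a = ∑' k, (((wt k) ^ r * ‖a k‖₊ : ℝ≥0) : ℝ≥0∞) := by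
    simp [wnorm, enorm_eq_nnnorm]
  rw [h, ENNReal.tsum_coe_ne_top_iff_summable, ← NNReal.summable_coe]
  simp

lemma summable_norm_of_wnorm {r : ℕ} {a : ℤ → E} (h : wnorm r a ≠ ⊤) :
    Summable fun k => ‖a k‖ := by
  have := wnorm_ne_top_iff.1 (wnorm_ne_top_of_le (Nat.zero_le r) h)
  simpa using this

lemma wnorm_congr_norm {F : Type*} [NormedAddCommGroup F] (r : ℕ) {a : ℤ → E} {b : ℤ → F}
    (h : ∀ k, ‖a k‖ ≤ ‖b k‖) : wnorm r a ≤ wnorm r b := by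
  refine ENNReal.tsum_le_tsum fun k => ?_
  gcongr
  exact enorm_le_iff_norm_le.2 (h k)

variable {B : Type*} [NormedCommRing B]

/-- Convolution of two sequences. -/
noncomputable def conv (a b : ℤ → B) (n : ℤ) : B := ∑' m, a m * b (n - m)

lemma wnorm_conv_le (r : ℕ) (a b : ℤ → B) : wnorm r (conv a b) ≤ wnorm r a * wnorm r b := by
  have h1 : ∀ n m : ℤ, (wt n : ℝ≥0∞) ^ r * ‖a m * b (n - m)‖ₑ ≤
      ((wt m : ℝ≥0∞) ^ r * ‖a m‖ₑ) * ((wt (n - m) : ℝ≥0∞) ^ r * ‖b (n - m)‖ₑ) := by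
    intro n m
    have hw : (wt n : ℝ≥0∞) ≤ wt m * wt (n - m) := by
      have := wt_add_le m (n - m)
      rw [add_sub_cancel] at this
      exact_mod_cast this
    have hm : ‖a m * b (n - m)‖ₑ ≤ ‖a m‖ₑ * ‖b (n - m)‖ₑ := by
      simp only [enorm_eq_nnnorm, ← ENNReal.coe_mul]
      exact_mod_cast nnnorm_mul_le _ _
    calc (wt n : ℝ≥0∞) ^ r * ‖a m * b (n - m)‖ₑ
        ≤ (wt m * wt (n - m) : ℝ≥0∞) ^ r * (‖a m‖ₑ * ‖b (n - m)‖ₑ) := by gcongr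
      _ = _ := by rw [mul_pow]; ring
  calc wnorm r (conv a b)
      ≤ ∑' n, ∑' m, (wt n : ℝ≥0∞) ^ r * ‖a m * b (n - m)‖ₑ := by
        refine ENNReal.tsum_le_tsum fun n => ?_
        rw [ENNReal.tsum_mul_left]
        gcongr
        exact enorm_tsum_le_tsum_enorm
    _ ≤ ∑' n, ∑' m, ((wt m : ℝ≥0∞) ^ r * ‖a m‖ₑ) *
          ((wt (n - m) : ℝ≥0∞) ^ r * ‖b (n - m)‖ₑ) :=
        ENNReal.tsum_le_tsum fun n => ENNReal.tsum_le_tsum fun m => h1 n m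
    _ = ∑' m, ∑' n, ((wt m : ℝ≥0∞) ^ r * ‖a m‖ₑ) *
          ((wt (n - m) : ℝ≥0∞) ^ r * ‖b (n - m)‖ₑ) := ENNReal.tsum_comm
    _ = ∑' m, ((wt m : ℝ≥0∞) ^ r * ‖a m‖ₑ) * wnorm r b := by
        refine tsum_congr fun m => ?_
        rw [ENNReal.tsum_mul_left]
        congr 1
        exact (Equiv.subRight m).tsum_eq (fun n => (wt n : ℝ≥0∞) ^ r * ‖b n‖ₑ)
    _ = wnorm r a * wnorm r b := by rw [ENNReal.tsum_mul_right]; rfl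

lemma wnorm_conv_ne_top {r : ℕ} {a b : ℤ → B} (ha : wnorm r a ≠ ⊤) (hb : wnorm r b ≠ ⊤) :
    wnorm r (conv a b) ≠ ⊤ :=
  ne_top_of_le_ne_top (ENNReal.mul_ne_top ha hb) (wnorm_conv_le r a b)

variable [CompleteSpace B]

lemma summable_conv {a b : ℤ → B} (ha : wnorm 0 a ≠ ⊤) (hb : wnorm 0 b ≠ ⊤) (n : ℤ) :
    Summable fun m => a m * b (n - m) := by
  have ha' := summable_norm_of_wnorm ha
  obtain ⟨C, hC⟩ : ∃ C, ∀ k, ‖b k‖ ≤ C := by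
    refine ⟨∑' k, ‖b k‖, fun k => ?_⟩
    exact (summable_norm_of_wnorm hb).le_tsum k fun _ _ => norm_nonneg _
  refine Summable.of_norm_bounded (ha'.mul_right C) fun m => ?_
  exact (norm_mul_le _ _).trans (by gcongr; exact hC _)

lemma conv_sub_conv {a a' b b' : ℤ → B} (ha : wnorm 0 a ≠ ⊤) (ha' : wnorm 0 a' ≠ ⊤)
    (hb : wnorm 0 b ≠ ⊤) (hb' : wnorm 0 b' ≠ ⊤) :
    conv a b - conv a' b' = conv (a - a') b + conv a' (b - b') := by
  funext n
  have h1 : wnorm 0 (a - a') ≠ ⊤ :=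
    ne_top_of_le_ne_top (ENNReal.add_ne_top.2 ⟨ha, ha'⟩) (wnorm_sub_le _ _ _)
  have h2 : wnorm 0 (b - b') ≠ ⊤ :=
    ne_top_of_le_ne_top (ENNReal.add_ne_top.2 ⟨hb, hb'⟩) (wnorm_sub_le _ _ _)
  rw [Pi.sub_apply, Pi.add_apply, conv, conv, conv, conv]
  rw [← (summable_conv ha hb n).tsum_sub (summable_conv ha' hb' n),
    ← Summable.tsum_add (summable_conv h1 hb n) (summable_conv ha' h2 n)]
  refine tsum_congr fun m => ?_
  simp only [Pi.sub_apply]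
  ring

lemma map_conv {B' : Type*} [NormedCommRing B'] [NormedSpace ℂ B] [NormedSpace ℂ B']
    (e : B →L[ℂ] B') (he : ∀ x y, e (x * y) = e x * e y) {a b : ℤ → B}
    (ha : wnorm 0 a ≠ ⊤) (hb : wnorm 0 b ≠ ⊤) (n : ℤ) :
    e (conv a b n) = conv (fun k => e (a k)) (fun k => e (b k)) n := by
  simp only [conv]
  rw [e.map_tsum (summable_conv ha hb n)]
  exact tsum_congr fun m => he _ _

/-- The unit for convolution. -/
def dirac (k : ℤ) : B := if k = 0 then 1 else 0

omit [CompleteSpace B] in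
lemma wnorm_dirac (r : ℕ) : wnorm r (dirac : ℤ → B) = ‖(1 : B)‖ₑ := by
  rw [wnorm, tsum_eq_single 0 (by intro k hk; simp [dirac, hk])]
  simp [dirac, wt]

/-- Convolution powers. -/
noncomputable def cpow (a : ℤ → B) : ℕ → ℤ → B
  | 0 => dirac
  | n + 1 => conv a (cpow a n)

/-- The Fourier multiplier of `∂_x^i`. -/
noncomputable def dx [NormedAlgebra ℂ B] (i : ℕ) (a : ℤ → B) (k : ℤ) : B :=
  (Complex.I * (k : ℂ)) ^ i • a k

omit [CompleteSpace B] in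
lemma wnorm_dx_le [NormedAlgebra ℂ B] (i r : ℕ) (a : ℤ → B) :
    wnorm r (dx i a) ≤ wnorm (r + i) a := by
  refine ENNReal.tsum_le_tsum fun k => ?_
  rw [dx, enorm_smul, pow_add, mul_assoc]
  gcongr
  rw [← ENNReal.coe_pow, enorm_eq_nnnorm, ENNReal.coe_le_coe, nnnorm_pow]
  gcongr
  rw [← NNReal.coe_le_coe, coe_wt]
  simp [Int.norm_eq_abs]

/-- Nonlinear maps on sequences that lose three derivatives and are Lipschitz on bounded sets. -/
structure LosesThree (F : (ℤ → B) → ℤ → B) : Prop where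
  lip : ∀ R : ℝ≥0, ∃ K : ℝ≥0, ∀ u v : ℤ → B, wnorm 3 u ≤ R → wnorm 3 v ≤ R →
    wnorm 0 (F u) ≤ K ∧ wnorm 0 (F u - F v) ≤ K * wnorm 3 (u - v)
  reg : ∀ r u, wnorm (r + 3) u ≠ ⊤ → wnorm r (F u) ≠ ⊤

omit [CompleteSpace B] in
lemma LosesThree.dirac : LosesThree (fun _ => (dirac : ℤ → B)) where
  lip R := ⟨‖(1 : B)‖₊, fun u v _ _ => ⟨by rw [wnorm_dirac]; rfl, by simp [wnorm_zero]⟩⟩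
  reg r u _ := by rw [wnorm_dirac]; exact enorm_ne_top

omit [CompleteSpace B] in
lemma LosesThree.dx [NormedAlgebra ℂ B] {i : ℕ} (hi : i ≤ 3) :
    LosesThree (fun u : ℤ → B => dx i u) where
  lip R := by
    refine ⟨R + 1, fun u v hu _ => ⟨?_, ?_⟩⟩
    · refine (wnorm_dx_le i 0 u).trans ((wnorm_mono_left (by omega) u).trans (hu.trans ?_))
      exact_mod_cast le_self_add
    · have : FifthOrderStmt14.dx i u - FifthOrderStmt14.dx i v =
          FifthOrderStmt14.dx i (u - v) := by
        funext k
        simp [FifthOrderStmt14.dx, smul_sub]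
      rw [this]
      refine (wnorm_dx_le i 0 _).trans ((wnorm_mono_left (by omega : 0 + i ≤ 3) _).trans ?_)
      refine le_mul_of_one_le_left zero_le ?_
      exact_mod_cast le_add_self
  reg r u hu := ne_top_of_le_ne_top hu
    ((wnorm_dx_le i r u).trans (wnorm_mono_left (by omega) u))

lemma LosesThree.conv {F G : (ℤ → B) → ℤ → B} (hF : LosesThree F) (hG : LosesThree G) :
    LosesThree (fun u => conv (F u) (G u)) where
  lip R := by
    obtain ⟨K, hK⟩ := hF.lip R
    obtain ⟨L, hL⟩ := hG.lip R
    refine ⟨K * L + K * L, fun u v hu hv => ⟨?_, ?_⟩⟩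
    · refine (wnorm_conv_le 0 _ _).trans ?_
      refine (mul_le_mul' (hK u v hu hv).1 (hL u v hu hv).1).trans ?_
      exact_mod_cast le_self_add
    · have t : ∀ {x : ℝ≥0∞} {M : ℝ≥0}, x ≤ M → x ≠ ⊤ :=
        fun h => ne_top_of_le_ne_top ENNReal.coe_ne_top h
      rw [conv_sub_conv (t (hK u v hu hv).1) (t (hK v u hv hu).1) (t (hL u v hu hv).1)
        (t (hL v u hv hu).1)]
      refine (wnorm_add_le _ _ _).trans ?_
      calc _ ≤ wnorm 0 (F u - F v) * wnorm 0 (G u) + wnorm 0 (F v) * wnorm 0 (G u - G v) :=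
            add_le_add (wnorm_conv_le _ _ _) (wnorm_conv_le _ _ _)
        _ ≤ (K * wnorm 3 (u - v)) * L + K * (L * wnorm 3 (u - v)) := by
            gcongr
            · exact (hK u v hu hv).2
            · exact (hL u v hu hv).1
            · exact (hK v u hv hu).1
            · exact (hL u v hu hv).2
        _ = _ := by push_cast; ring
  reg r u hu := wnorm_conv_ne_top (hF.reg r u hu) (hG.reg r u hu)

lemma LosesThree.cpow {F : (ℤ → B) → ℤ → B} (hF : LosesThree F) (n : ℕ) :
    LosesThree (fun u => cpow (F u) n) := by
  induction n with
  | zero => exact LosesThree.dirac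
  | succ n ih => exact hF.conv ih

omit [CompleteSpace B] in
lemma LosesThree.smul [NormedAlgebra ℂ B] {F : (ℤ → B) → ℤ → B} (hF : LosesThree F) (c : ℂ) :
    LosesThree (fun u => c • F u) where
  lip R := by
    obtain ⟨K, hK⟩ := hF.lip R
    refine ⟨‖c‖₊ * K, fun u v hu hv => ⟨?_, ?_⟩⟩
    · rw [wnorm_const_smul, ENNReal.coe_mul]
      exact mul_le_mul' le_rfl (hK u v hu hv).1
    · rw [← smul_sub, wnorm_const_smul, ENNReal.coe_mul, mul_assoc]
      exact mul_le_mul' le_rfl (hK u v hu hv).2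
  reg r u hu := by
    rw [wnorm_const_smul]
    exact ENNReal.mul_ne_top enorm_ne_top (hF.reg r u hu)

omit [CompleteSpace B] in
lemma LosesThree.sum {ι : Type*} (s : Finset ι) {F : ι → (ℤ → B) → ℤ → B}
    (hF : ∀ i, LosesThree (F i)) : LosesThree (fun u => ∑ i ∈ s, F i u) where
  lip R := by
    choose K hK using fun i => (hF i).lip R
    refine ⟨∑ i ∈ s, K i, fun u v hu hv => ⟨?_, ?_⟩⟩
    · refine (wnorm_sum_le _ _ _).trans ?_
      push_cast
      exact Finset.sum_le_sum fun i _ => (hK i u v hu hv).1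
    · rw [← Finset.sum_sub_distrib]
      refine (wnorm_sum_le _ _ _).trans ?_
      push_cast
      rw [Finset.sum_mul]
      exact Finset.sum_le_sum fun i _ => (hK i u v hu hv).2
  reg r u hu := ne_top_of_le_ne_top
    (ENNReal.sum_ne_top.2 fun i _ => (hF i).reg r u hu) (wnorm_sum_le _ _ _)

/-- The nonlinearity acting on sequences of Fourier coefficients. -/
noncomputable def Nseq [NormedAlgebra ℂ B] (j0 : ℕ) (lam : Fin j0 → ℝ) (a b c d : Fin j0 → ℕ)
    (u : ℤ → B) : ℤ → B :=
  ∑ j : Fin j0, (lam j : ℂ) • conv (cpow (dx 3 u) (a j)) (conv (cpow (dx 2 u) (b j))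
    (conv (cpow (dx 1 u) (c j)) (cpow (dx 0 u) (d j))))

lemma losesThree_Nseq [NormedAlgebra ℂ B] (j0 : ℕ) (lam : Fin j0 → ℝ) (a b c d : Fin j0 → ℕ) :
    LosesThree (Nseq j0 lam a b c d : (ℤ → B) → ℤ → B) :=
  LosesThree.sum _ fun j => ((((LosesThree.dx le_rfl).cpow (a j)).conv
    (((LosesThree.dx (by norm_num)).cpow (b j)).conv
      (((LosesThree.dx (by norm_num)).cpow (c j)).conv
        ((LosesThree.dx (by norm_num)).cpow (d j)))))).smul (lam j : ℂ)

omit [CompleteSpace B] in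
lemma wnorm_dx_ne_top [NormedAlgebra ℂ B] {i : ℕ} (hi : i ≤ 3) {u : ℤ → B} (hu : wnorm 3 u ≠ ⊤) :
    wnorm 0 (dx i u) ≠ ⊤ :=
  ne_top_of_le_ne_top hu ((wnorm_dx_le i 0 u).trans (wnorm_mono_left (by omega) u))

omit [CompleteSpace B] in
lemma wnorm_cpow_ne_top {r : ℕ} {u : ℤ → B} (hu : wnorm r u ≠ ⊤) (n : ℕ) :
    wnorm r (cpow u n) ≠ ⊤ := by
  induction n with
  | zero => rw [cpow, wnorm_dirac]; exact enorm_ne_top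
  | succ n ih => exact wnorm_conv_ne_top hu ih

lemma map_cpow {B' : Type*} [NormedCommRing B'] [NormedSpace ℂ B] [NormedSpace ℂ B']
    (e : B →L[ℂ] B') (he : ∀ x y, e (x * y) = e x * e y) (he1 : e 1 = 1) {a : ℤ → B}
    (ha : wnorm 0 a ≠ ⊤) (m : ℕ) (n : ℤ) :
    e (cpow a m n) = cpow (fun k => e (a k)) m n := by
  induction m generalizing n with
  | zero =>
    by_cases h : n = 0 <;> simp [cpow, dirac, h, he1]
  | succ m ih =>
    rw [cpow, cpow, map_conv e he ha (wnorm_cpow_ne_top ha m)]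
    congr 1
    funext k
    exact ih k

lemma map_Nseq {B' : Type*} [NormedCommRing B'] [NormedAlgebra ℂ B] [NormedAlgebra ℂ B']
    (e : B →L[ℂ] B') (he : ∀ x y, e (x * y) = e x * e y) (he1 : e 1 = 1)
    (j0 : ℕ) (lam : Fin j0 → ℝ) (a b c d : Fin j0 → ℕ) {u : ℤ → B} (hu : wnorm 3 u ≠ ⊤) (n : ℤ) :
    e (Nseq j0 lam a b c d u n) = Nseq j0 lam a b c d (fun k => e (u k)) n := by
  have hd : ∀ i ≤ 3, wnorm 0 (dx i u) ≠ ⊤ := fun i hi => wnorm_dx_ne_top hi hu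
  have hp : ∀ i ≤ 3, ∀ m, wnorm 0 (cpow (dx i u) m) ≠ ⊤ :=
    fun i hi m => wnorm_cpow_ne_top (hd i hi) m
  have hdx : ∀ i, (fun k => e (dx i u k)) = dx i (fun k => e (u k)) := by
    intro i
    funext k
    simp [dx]
  have hc : ∀ i ≤ 3, ∀ m, (fun k => e (cpow (dx i u) m k)) = cpow (dx i fun k => e (u k)) m := by
    intro i hi m
    funext k
    rw [map_cpow e he he1 (hd i hi), hdx]
  simp only [Nseq, Finset.sum_apply, Pi.smul_apply, map_sum, map_smul]
  refine Finset.sum_congr rfl fun j _ => ?_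
  have h0 := hp 0 (by norm_num) (d j)
  have h1 := hp 1 (by norm_num) (c j)
  have h2 := hp 2 (by norm_num) (b j)
  have h3 := hp 3 (by norm_num) (a j)
  rw [map_conv e he h3 (wnorm_conv_ne_top h2 (wnorm_conv_ne_top h1 h0)), hc 3 le_rfl]
  congr 2
  funext k
  rw [map_conv e he h2 (wnorm_conv_ne_top h1 h0), hc 2 (by norm_num)]
  congr 1
  funext k
  rw [map_conv e he h1 h0, hc 1 (by norm_num), hc 0 (by norm_num)]

end Wiener

section Fourier

open scoped ENNReal NNReal Topology
open MeasureTheory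

lemma hasSum_integral_of_norm_le {F : ℤ → ℝ → ℂ} {A : ℤ → ℝ} {a b : ℝ} (hab : a ≤ b)
    (hF : ∀ n, ContinuousOn (F n) (Set.Icc a b)) (hA : Summable A)
    (hb : ∀ n, ∀ x ∈ Set.Icc a b, ‖F n x‖ ≤ A n) :
    HasSum (fun n => ∫ x in a..b, F n x) (∫ x in a..b, ∑' n, F n x) := by
  have hsub : Set.uIoc a b ⊆ Set.Icc a b := by
    rw [Set.uIoc_of_le hab]; exact Set.Ioc_subset_Icc_self
  refine intervalIntegral.hasSum_integral_of_dominated_convergence (fun n _ => A n) ?_ ?_ ?_ ?_ ?_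
  · intro n
    exact ((hF n).mono hsub).aestronglyMeasurable measurableSet_uIoc
  · intro n
    exact ae_of_all _ fun x hx => hb n x (hsub hx)
  · exact ae_of_all _ fun x _ => hA
  · exact intervalIntegrable_const
  · refine ae_of_all _ fun x hx => Summable.hasSum ?_
    exact Summable.of_norm_bounded hA fun n => hb n x (hsub hx)

/-- The character `e^{ikx}`. -/
noncomputable def ec (k : ℤ) (x : ℝ) : ℂ := Complex.exp (Complex.I * k * x)

lemma norm_ec (k : ℤ) (x : ℝ) : ‖ec k x‖ = 1 := by
  have : Complex.I * k * x = ((k * x : ℝ) : ℂ) * Complex.I := by push_cast; ring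
  rw [ec, this, Complex.norm_exp_ofReal_mul_I]

lemma ec_add (m n : ℤ) (x : ℝ) : ec (m + n) x = ec m x * ec n x := by
  rw [ec, ec, ec, ← Complex.exp_add]
  congr 1; push_cast; ring

lemma ec_zero (x : ℝ) : ec 0 x = 1 := by simp [ec]

lemma continuous_ec (k : ℤ) : Continuous (ec k) := by unfold ec; fun_prop

lemma hasDerivAt_ec (k : ℤ) (x : ℝ) : HasDerivAt (ec k) (Complex.I * k * ec k x) x := by
  have h1 : HasDerivAt (fun y : ℝ => Complex.I * k * (y : ℂ)) (Complex.I * k) x := by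
    simpa using (Complex.ofRealCLM.hasDerivAt (x := x)).const_mul (Complex.I * (k : ℂ))
  have := h1.cexp
  convert! this using 1
  rw [ec, mul_comm]

lemma ec_periodic (k : ℤ) : Function.Periodic (ec k) (2 * Real.pi) := by
  intro x
  rw [ec, ec, Complex.exp_eq_exp_iff_exists_int]
  exact ⟨k, by push_cast; ring⟩

lemma ec_two_pi (k : ℤ) : ec k (2 * Real.pi) = ec k 0 := by
  simpa using ec_periodic k 0

lemma integral_ec (k : ℤ) :
    ∫ x in (0:ℝ)..(2 * Real.pi), ec k x = if k = 0 then 2 * Real.pi else 0 := by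
  split_ifs with h
  · subst h
    simp [ec]
  · have hk : (Complex.I * k) ≠ 0 := by simp [h]
    have := integral_exp_mul_complex (a := 0) (b := 2 * Real.pi) hk
    simp only [ec]
    rw [this]
    have h2 := ec_two_pi k
    simp only [ec] at h2
    rw [h2]; simp

/-- The sum of the Fourier series with coefficients `a`. -/
noncomputable def eser (a : ℤ → ℂ) (x : ℝ) : ℂ := ∑' k, a k * ec k x

lemma summable_eser {a : ℤ → ℂ} (ha : wnorm 0 a ≠ ⊤) (x : ℝ) : Summable fun k => ‖a k * ec k x‖ := by
  simpa [norm_ec] using summable_norm_of_wnorm ha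

lemma continuous_eser {a : ℤ → ℂ} (ha : wnorm 0 a ≠ ⊤) : Continuous (eser a) :=
  continuous_tsum (fun k => continuous_const.mul (continuous_ec k)) (summable_norm_of_wnorm ha)
    fun k x => by simp [norm_ec]

lemma eser_periodic (a : ℤ → ℂ) : Function.Periodic (eser a) (2 * Real.pi) := by
  intro x
  simp only [eser]
  exact tsum_congr fun k => by rw [ec_periodic k x]

lemma eser_conv {a b : ℤ → ℂ} (ha : wnorm 0 a ≠ ⊤) (hb : wnorm 0 b ≠ ⊤) (x : ℝ) :
    eser (conv a b) x = eser a x * eser b x := by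
  have hs := summable_mul_of_summable_norm (summable_eser ha x) (summable_eser hb x)
  let e : ℤ × ℤ ≃ ℤ × ℤ :=
    { toFun := fun p => (p.2, p.1 - p.2)
      invFun := fun p => (p.1 + p.2, p.1)
      left_inv := fun p => by ext <;> simp
      right_inv := fun p => by ext <;> simp }
  rw [eser, eser, eser, tsum_mul_tsum_of_summable_norm (summable_eser ha x) (summable_eser hb x),
    ← e.tsum_eq]
  have hs' := (e.summable_iff).2 hs
  rw [Summable.tsum_prod (by exact hs')]
  refine tsum_congr fun n => ?_
  rw [conv, ← tsum_mul_right]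
  refine tsum_congr fun m => ?_
  have : ec n x = ec m x * ec (n - m) x := by rw [← ec_add, add_sub_cancel]
  simp only [e, Equiv.coe_fn_mk]
  rw [this]; ring

lemma eser_cpow {a : ℤ → ℂ} (ha : wnorm 0 a ≠ ⊤) (n : ℕ) (x : ℝ) :
    eser (cpow a n) x = eser a x ^ n := by
  induction n with
  | zero =>
    rw [eser, tsum_eq_single 0 (by intro k hk; simp [cpow, dirac, hk])]
    simp [cpow, dirac, ec_zero]
  | succ n ih => rw [cpow, eser_conv ha (wnorm_cpow_ne_top ha n), ih, pow_succ']

lemma eser_Nseq (j0 : ℕ) (lam : Fin j0 → ℝ) (a b c d : Fin j0 → ℕ) {u : ℤ → ℂ}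
    (hu : wnorm 3 u ≠ ⊤) (x : ℝ) :
    eser (Nseq j0 lam a b c d u) x = ∑ j, (lam j : ℂ) * eser (dx 3 u) x ^ a j *
      eser (dx 2 u) x ^ b j * eser (dx 1 u) x ^ c j * eser (dx 0 u) x ^ d j := by
  have hd : ∀ i ≤ 3, wnorm 0 (dx i u) ≠ ⊤ := fun i hi => wnorm_dx_ne_top hi hu
  have hp : ∀ i ≤ 3, ∀ m, wnorm 0 (cpow (dx i u) m) ≠ ⊤ :=
    fun i hi m => wnorm_cpow_ne_top (hd i hi) m
  have hc := fun j => wnorm_conv_ne_top (hp 1 (by norm_num) (c j)) (hp 0 (by norm_num) (d j))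
  have hc' := fun j => wnorm_conv_ne_top (hp 2 (by norm_num) (b j)) (hc j)
  have hc'' := fun j => wnorm_conv_ne_top (hp 3 (by norm_num) (a j)) (hc' j)
  have h1 : ∀ j : Fin j0, eser (conv (cpow (dx 3 u) (a j)) (conv (cpow (dx 2 u) (b j))
      (conv (cpow (dx 1 u) (c j)) (cpow (dx 0 u) (d j))))) x = eser (dx 3 u) x ^ a j *
      (eser (dx 2 u) x ^ b j * (eser (dx 1 u) x ^ c j * eser (dx 0 u) x ^ d j)) := by
    intro j
    rw [eser_conv (hp 3 le_rfl _) (hc' j), eser_conv (hp 2 (by norm_num) _) (hc j),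
      eser_conv (hp 1 (by norm_num) _) (hp 0 (by norm_num) _), eser_cpow (hd 3 le_rfl),
      eser_cpow (hd 2 (by norm_num)), eser_cpow (hd 1 (by norm_num)),
      eser_cpow (hd 0 (by norm_num))]
  have h2 : ∀ k, Nseq j0 lam a b c d u k * ec k x = ∑ j, (lam j : ℂ) *
      (conv (cpow (dx 3 u) (a j)) (conv (cpow (dx 2 u) (b j))
      (conv (cpow (dx 1 u) (c j)) (cpow (dx 0 u) (d j)))) k * ec k x) := by
    intro k
    simp only [Nseq, Finset.sum_apply, Pi.smul_apply, smul_eq_mul, Finset.sum_mul, mul_assoc]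
  rw [eser]
  simp_rw [h2]
  rw [Summable.tsum_finsetSum fun j _ => ((summable_eser (hc'' j) x).of_norm).mul_left _]
  refine Finset.sum_congr rfl fun j _ => ?_
  rw [tsum_mul_left]
  have := h1 j
  rw [eser] at this
  rw [this]; ring

lemma hasDerivAt_eser {a : ℤ → ℂ} (ha : wnorm 1 a ≠ ⊤) (x : ℝ) :
    HasDerivAt (eser a) (eser (dx 1 a) x) x := by
  have h := wnorm_ne_top_iff.1 ha
  simp only [pow_one] at h
  refine hasDerivAt_tsum (g' := fun k y => dx 1 a k * ec k y) (y₀ := 0) h ?_ ?_ ?_ x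
  · intro k y
    have := (hasDerivAt_ec k y).const_mul (a k)
    convert! this using 1
    simp [dx]; ring
  · intro k y
    rw [norm_mul, norm_ec, mul_one, dx, norm_smul, pow_one, coe_wt]
    gcongr
    simp
  · exact (summable_eser (wnorm_ne_top_of_le zero_le_one ha) 0).of_norm

lemma deriv_of_eser {a : ℤ → ℂ} (ha : wnorm 1 a ≠ ⊤) {f : ℝ → ℝ} (hf : ∀ x, (f x : ℂ) = eser a x) :
    Differentiable ℝ f ∧ ∀ x, ((deriv f x : ℝ) : ℂ) = eser (dx 1 a) x := by
  have h : ∀ x, HasDerivAt (fun y => (f y : ℂ)) (eser (dx 1 a) x) x := by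
    intro x
    have := hasDerivAt_eser ha x
    rwa [← funext hf] at this
  have hre : ∀ x, HasDerivAt f (eser (dx 1 a) x).re x := fun x => by
    simpa [Function.comp_def] using Complex.reCLM.hasFDerivAt.comp_hasDerivAt x (h x)
  have him : ∀ x, (eser (dx 1 a) x).im = 0 := fun x => by
    have h1 := Complex.imCLM.hasFDerivAt.comp_hasDerivAt x (h x)
    have h2 : HasDerivAt (Complex.imCLM ∘ fun y => (f y : ℂ)) 0 x := by
      have : (Complex.imCLM ∘ fun y => (f y : ℂ)) = fun _ => (0:ℝ) := by
        funext y; simp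
      rw [this]; exact hasDerivAt_const _ _
    simpa using h1.unique h2
  refine ⟨fun x => (hre x).differentiableAt, fun x => ?_⟩
  rw [(hre x).deriv]
  apply Complex.ext <;> simp [him x]

lemma dx_dx (i j : ℕ) (a : ℤ → ℂ) : dx i (dx j a) = dx (j + i) a := by
  funext k
  simp only [dx, smul_smul, ← pow_add, add_comm]

lemma iteratedDeriv_of_eser {a : ℤ → ℂ} {f : ℝ → ℝ} (hf : ∀ x, (f x : ℂ) = eser a x) (n : ℕ)
    (ha : wnorm n a ≠ ⊤) : ∀ x, ((iteratedDeriv n f x : ℝ) : ℂ) = eser (dx n a) x := by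
  induction n with
  | zero =>
    intro x
    have : dx 0 a = a := by funext k; simp [dx]
    simp [this, hf]
  | succ n ih =>
    intro x
    rw [iteratedDeriv_succ, (deriv_of_eser ?_ (ih (wnorm_ne_top_of_le (by omega) ha))).2, dx_dx]
    refine ne_top_of_le_ne_top ha ((wnorm_dx_le n 1 a).trans (by rw [add_comm]))

lemma contDiff_of_eser {a : ℤ → ℂ} {f : ℝ → ℝ} (hf : ∀ x, (f x : ℂ) = eser a x) (n : ℕ)
    (ha : wnorm n a ≠ ⊤) : ContDiff ℝ n f := by
  rw [contDiff_nat_iff_iteratedDeriv]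
  constructor
  · intro m hm
    have h := iteratedDeriv_of_eser hf m (wnorm_ne_top_of_le hm ha)
    have hc := continuous_eser (ne_top_of_le_ne_top ha
      ((wnorm_dx_le m 0 a).trans (wnorm_mono_left (by omega) a)))
    rw [← funext h] at hc
    exact Complex.continuous_re.comp hc
  · intro m hm
    have h := iteratedDeriv_of_eser hf m (wnorm_ne_top_of_le hm.le ha)
    exact (deriv_of_eser (ne_top_of_le_ne_top ha
      ((wnorm_dx_le m 1 a).trans (wnorm_mono_left (by omega) a))) h).1

lemma fc_eq (f : ℝ → ℝ) (k : ℤ) :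
    fc f k = (Complex.ofReal (2 * Real.pi))⁻¹ * ∫ x in (0:ℝ)..(2 * Real.pi), (f x : ℂ) * ec (-k) x := by
  simp [fc, ec]

lemma fc_of_eser {a : ℤ → ℂ} (ha : wnorm 0 a ≠ ⊤) {f : ℝ → ℝ} (hf : ∀ x, (f x : ℂ) = eser a x)
    (k : ℤ) : fc f k = a k := by
  have h := hasSum_integral_of_norm_le (F := fun n x => a n * ec (n - k) x) (A := fun n => ‖a n‖)
    (a := 0) (b := 2 * Real.pi) (by positivity)
    (fun n => (continuous_const.mul (continuous_ec _)).continuousOn) (summable_norm_of_wnorm ha)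
    (fun n x _ => by simp [norm_ec])
  have h1 : ∀ n, ∫ x in (0:ℝ)..(2 * Real.pi), a n * ec (n - k) x =
      if n = k then a k * (2 * Real.pi) else 0 := by
    intro n
    rw [intervalIntegral.integral_const_mul, integral_ec]
    by_cases hn : n = k
    · simp [hn]
    · simp [hn, sub_eq_zero]
  simp_rw [h1] at h
  have h2 : ∀ x, ∑' n, a n * ec (n - k) x = (f x : ℂ) * ec (-k) x := by
    intro x
    rw [hf, eser, ← tsum_mul_right]
    refine tsum_congr fun n => ?_
    rw [sub_eq_add_neg, ec_add]; ring
  simp_rw [h2] at h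
  rw [fc_eq, h.unique (hasSum_ite_eq k _)]
  have : (Real.pi : ℂ) ≠ 0 := by exact_mod_cast Real.pi_ne_zero
  push_cast
  field_simp

lemma eser_fc {f : ℝ → ℝ} (hc : Continuous f) (hp : Function.Periodic f (2 * Real.pi))
    (hs : wnorm 0 (fc f) ≠ ⊤) (x : ℝ) : (f x : ℂ) = eser (fc f) x := by
  have : Fact (0 < 2 * Real.pi) := ⟨by positivity⟩
  have hp' : Function.Periodic (fun x => (f x : ℂ)) (2 * Real.pi) := fun x => by simp only [hp x]
  let F : C(AddCircle (2 * Real.pi), ℂ) := ⟨hp'.lift, by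
    refine continuous_coinduced_dom.2 ?_
    exact Complex.continuous_ofReal.comp hc⟩
  have hfour : ∀ (n : ℤ) (x : ℝ), fourier n (x : AddCircle (2 * Real.pi)) = ec n x := by
    intro n x
    rw [fourier_coe_apply, ec]
    congr 1
    have : (Real.pi : ℂ) ≠ 0 := by exact_mod_cast Real.pi_ne_zero
    push_cast
    field_simp
  have hF : ∀ x : ℝ, F (x : AddCircle (2 * Real.pi)) = f x := fun x => rfl
  have hco : ∀ k, fourierCoeff F k = fc f k := by
    intro k
    rw [fourierCoeff_eq_intervalIntegral F k 0, fc_eq, zero_add, Complex.real_smul]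
    simp_rw [hfour, hF, smul_eq_mul]
    push_cast
    rw [one_div]
    congr 1
    exact intervalIntegral.integral_congr fun x _ => mul_comm _ _
  have hsum : Summable (fourierCoeff F) := by
    rw [funext hco]
    exact (summable_norm_of_wnorm hs).of_norm
  have := has_pointwise_sum_fourier_series_of_summable hsum (x : AddCircle (2 * Real.pi))
  rw [hF] at this
  rw [← this.tsum_eq, eser]
  refine tsum_congr fun k => ?_
  rw [hco, hfour, smul_eq_mul]

lemma fc_Nfun (j0 : ℕ) (lam : Fin j0 → ℝ) (a b c d : Fin j0 → ℕ) {u : ℤ → ℂ}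
    (hu : wnorm 3 u ≠ ⊤) {f : ℝ → ℝ} (hf : ∀ x, (f x : ℂ) = eser u x) :
    (∀ x, (Nfun j0 lam a b c d f x : ℂ) = eser (Nseq j0 lam a b c d u) x) ∧
    ∀ k, fc (Nfun j0 lam a b c d f) k = Nseq j0 lam a b c d u k := by
  have h : ∀ x, (Nfun j0 lam a b c d f x : ℂ) = eser (Nseq j0 lam a b c d u) x := by
    intro x
    have hi := fun i (hi : i ≤ 3) => iteratedDeriv_of_eser hf i (wnorm_ne_top_of_le hi hu) x
    rw [eser_Nseq j0 lam a b c d hu, ← hi 3 le_rfl, ← hi 2 (by norm_num), ← hi 1 (by norm_num),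
      ← hi 0 (by norm_num)]
    simp [Nfun, iteratedDeriv_one]
  exact ⟨h, fun k => fc_of_eser ((losesThree_Nseq j0 lam a b c d).reg 0 u hu) h k⟩

lemma fc_neg_index (f : ℝ → ℝ) (k : ℤ) : fc f (-k) = star (fc f k) := by
  rw [fc_eq, fc_eq, star_mul', Complex.star_def, ← intervalIntegral.intervalIntegral_conj]
  congr 1
  · rw [map_inv₀, Complex.conj_ofReal]
  · refine intervalIntegral.integral_congr fun x _ => ?_
    simp only [ec, map_mul, Complex.conj_ofReal, ← Complex.exp_conj]
    congr 2
    simp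

lemma fc_sub {f g : ℝ → ℝ} (hf : Continuous f) (hg : Continuous g) (k : ℤ) :
    fc (fun x => f x - g x) k = fc f k - fc g k := by
  rw [fc_eq, fc_eq, fc_eq, ← mul_sub, ← intervalIntegral.integral_sub]
  · congr 1
    refine intervalIntegral.integral_congr fun x _ => ?_
    push_cast; ring
  · exact ((Complex.continuous_ofReal.comp hf).mul (continuous_ec _)).intervalIntegrable _ _
  · exact ((Complex.continuous_ofReal.comp hg).mul (continuous_ec _)).intervalIntegrable _ _

lemma star_ec (k : ℤ) (x : ℝ) : star (ec k x) = ec (-k) x := by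
  simp only [ec, Complex.star_def, ← Complex.exp_conj]
  congr 1
  simp

/-- A Fourier series with Hermitian coefficients is real valued. -/
lemma eser_re {a : ℤ → ℂ} (ha : ∀ k, a (-k) = star (a k)) (x : ℝ) :
    ((eser a x).re : ℂ) = eser a x := by
  rw [← Complex.conj_eq_iff_re, ← Complex.star_def, eser, tsum_star, ← (Equiv.neg ℤ).tsum_eq]
  refine tsum_congr fun k => ?_
  rw [Equiv.neg_apply, star_mul', star_ec, ha, star_star, neg_neg]

end Fourier

section Sobolev

open scoped ENNReal NNReal

variable {E : Type*} [NormedAddCommGroup E]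

/-- The Sobolev condition on a sequence of Fourier coefficients. -/
def SobSummable (s : ℕ) (a : ℤ → E) : Prop :=
  Summable fun k : ℤ => (1 + (k : ℝ) ^ 2) ^ s * ‖a k‖ ^ 2

/-- The squared Sobolev norm of a sequence of Fourier coefficients. -/
noncomputable def sobSq (s : ℕ) (a : ℤ → E) : ℝ :=
  ∑' k : ℤ, (1 + (k : ℝ) ^ 2) ^ s * ‖a k‖ ^ 2

lemma hsNorm_eq (s : ℕ) (f : ℝ → ℝ) : hsNorm s f = √(sobSq s (fc f)) := rfl

lemma one_le_bracket (k : ℤ) : (1 : ℝ) ≤ 1 + (k : ℝ) ^ 2 := by nlinarith [sq_nonneg (k : ℝ)]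

lemma SobSummable.mono {F : Type*} [NormedAddCommGroup F] {s s' : ℕ} (h : s' ≤ s) {a : ℤ → E}
    {b : ℤ → F} (ha : SobSummable s a) (hb : ∀ k, ‖b k‖ ≤ ‖a k‖) : SobSummable s' b := by
  refine Summable.of_nonneg_of_le (fun k => by positivity) (fun k => ?_) ha
  have := one_le_bracket k
  have := hb k
  gcongr

lemma sobSq_mono {F : Type*} [NormedAddCommGroup F] {s s' : ℕ} (h : s' ≤ s) {a : ℤ → E}
    {b : ℤ → F} (ha : SobSummable s a) (hb : ∀ k, ‖b k‖ ≤ ‖a k‖) : sobSq s' b ≤ sobSq s a := by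
  refine (ha.mono h hb).tsum_le_tsum (fun k => ?_) ha
  have := one_le_bracket k
  have := hb k
  gcongr

lemma SobSummable.add {s : ℕ} {a b : ℤ → E} (ha : SobSummable s a) (hb : SobSummable s b) :
    SobSummable s (a + b) := by
  refine Summable.of_nonneg_of_le (fun k => by positivity) (fun k => ?_)
    ((Summable.add ha hb).mul_left 2)
  have h1 : ‖a k + b k‖ ^ 2 ≤ 2 * (‖a k‖ ^ 2 + ‖b k‖ ^ 2) := by
    have := norm_add_le (a k) (b k)
    nlinarith [sq_nonneg (‖a k‖ - ‖b k‖), norm_nonneg (a k + b k)]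
  calc _ ≤ (1 + (k : ℝ) ^ 2) ^ s * (2 * (‖a k‖ ^ 2 + ‖b k‖ ^ 2)) := by
        gcongr; exact h1
    _ = _ := by ring

lemma SobSummable.sub {s : ℕ} {a b : ℤ → E} (ha : SobSummable s a) (hb : SobSummable s b) :
    SobSummable s (a - b) := by
  rw [sub_eq_add_neg]
  exact ha.add (hb.mono le_rfl fun k => by simp)

lemma wt_sq_le (k : ℤ) : (wt k : ℝ) ^ 2 ≤ 2 * (1 + (k : ℝ) ^ 2) := by
  rw [coe_wt]
  nlinarith [sq_nonneg (1 - |(k : ℝ)|), sq_abs (k : ℝ)]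

lemma bracket_le_wt_sq (k : ℤ) : 1 + (k : ℝ) ^ 2 ≤ (wt k : ℝ) ^ 2 := by
  rw [coe_wt]
  nlinarith [abs_nonneg (k : ℝ), sq_abs (k : ℝ)]

lemma summable_bracket_inv : Summable fun k : ℤ => (1 + (k : ℝ) ^ 2)⁻¹ := by
  have h : Summable fun k : ℤ => 1 / (k : ℝ) ^ 2 := Real.summable_one_div_int_pow.2 (by norm_num)
  refine (h.add (summable_of_ne_finset_zero (s := {0})
    (f := fun k : ℤ => if k = 0 then (1 : ℝ) else 0) (by simp +contextual))).of_nonneg_of_le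
    (fun k => by positivity) fun k => ?_
  by_cases hk : k = 0
  · simp [hk]
  · have : 0 < (k : ℝ) ^ 2 := by positivity
    simp only [hk, if_false, add_zero, one_div]
    gcongr
    linarith

/-- A weighted `ℓ²` norm controls the weighted `ℓ¹` norm with one derivative less. -/
lemma exists_wnorm_le_sob (r : ℕ) : ∃ C : ℝ, 0 ≤ C ∧ ∀ a : ℤ → E, SobSummable (r + 1) a →
    wnorm r a ≤ ENNReal.ofReal (C * √(sobSq (r + 1) a)) := by
  refine ⟨√((2 : ℝ) ^ r) * √(∑' k : ℤ, (1 + (k : ℝ) ^ 2)⁻¹), by positivity, fun a ha => ?_⟩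
  have h0 : ∀ k : ℤ, (0 : ℝ) < 1 + (k : ℝ) ^ 2 := fun k => by positivity
  have key := Real.summable_and_inner_le_Lp_mul_Lq_tsum_of_nonneg (p := 2) (q := 2)
    (f := fun k : ℤ => √(1 + (k : ℝ) ^ 2)⁻¹)
    (g := fun k : ℤ => √((1 + (k : ℝ) ^ 2) ^ (r + 1)) * ‖a k‖)
    Real.HolderConjugate.two_two (fun k => by positivity) (fun k => by positivity)
  have e1 : ∀ k : ℤ, √(1 + (k : ℝ) ^ 2)⁻¹ ^ (2 : ℝ) = (1 + (k : ℝ) ^ 2)⁻¹ := fun k => by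
    rw [Real.rpow_two, Real.sq_sqrt (by positivity)]
  have e2 : ∀ k : ℤ, (√((1 + (k : ℝ) ^ 2) ^ (r + 1)) * ‖a k‖) ^ (2 : ℝ) =
      (1 + (k : ℝ) ^ 2) ^ (r + 1) * ‖a k‖ ^ 2 := fun k => by
    rw [Real.rpow_two, mul_pow, Real.sq_sqrt (by positivity)]
  simp only [e1, e2] at key
  obtain ⟨k1, k2⟩ := key summable_bracket_inv ha
  have hle : ∀ k : ℤ, (wt k : ℝ) ^ r * ‖a k‖ ≤ √((2 : ℝ) ^ r) *
      (√(1 + (k : ℝ) ^ 2)⁻¹ * (√((1 + (k : ℝ) ^ 2) ^ (r + 1)) * ‖a k‖)) := by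
    intro k
    rw [← mul_assoc (√(1 + (k : ℝ) ^ 2)⁻¹), ← mul_assoc]
    gcongr
    rw [← Real.sqrt_mul (by positivity), ← Real.sqrt_mul (by positivity)]
    refine Real.le_sqrt_of_sq_le ?_
    rw [pow_succ (1 + (k : ℝ) ^ 2), ← pow_mul, mul_comm r 2, pow_mul]
    calc ((wt k : ℝ) ^ 2) ^ r ≤ (2 * (1 + (k : ℝ) ^ 2)) ^ r := by gcongr; exact wt_sq_le k
      _ = _ := by rw [mul_pow]; field_simp
  have hsum := (k1.mul_left (√((2 : ℝ) ^ r))).of_nonneg_of_le (fun k => by positivity) hle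
  have hw : wnorm r a = ENNReal.ofReal (∑' k : ℤ, (wt k : ℝ) ^ r * ‖a k‖) := by
    rw [ENNReal.ofReal_tsum_of_nonneg (fun k => by positivity) hsum]
    refine tsum_congr fun k => ?_
    rw [ENNReal.ofReal_mul (by positivity), ENNReal.ofReal_pow (by positivity), ofReal_norm]
    simp
  rw [hw]
  refine ENNReal.ofReal_le_ofReal ?_
  refine (hsum.tsum_le_tsum hle (k1.mul_left _)).trans ?_
  rw [tsum_mul_left, mul_assoc]
  gcongr
  simpa [Real.sqrt_eq_rpow, sobSq] using k2

lemma SobSummable.wnorm_ne_top {r : ℕ} {a : ℤ → E} (ha : SobSummable (r + 1) a) :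
    wnorm r a ≠ ⊤ := by
  obtain ⟨C, -, h⟩ := exists_wnorm_le_sob (E := E) r
  exact ne_top_of_le_ne_top ENNReal.ofReal_ne_top (h a ha)

lemma SobSummable.wnorm_three {s : ℕ} (hs : 4 ≤ s) {a : ℤ → E} (ha : SobSummable s a) :
    wnorm 3 a ≠ ⊤ := (ha.mono (s' := 4) hs fun _ => le_rfl).wnorm_ne_top

lemma sobSummable_of_wnorm {s : ℕ} {a : ℤ → E} (ha : wnorm s a ≠ ⊤) : SobSummable s a := by
  have h := wnorm_ne_top_iff.1 ha
  have h2 : Summable fun k => ((wt k : ℝ) ^ s * ‖a k‖) * ((wt k : ℝ) ^ s * ‖a k‖) := by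
    refine (h.mul_left (∑' k, (wt k : ℝ) ^ s * ‖a k‖)).of_nonneg_of_le
      (fun k => by positivity) fun k => ?_
    gcongr
    exact h.le_tsum k fun _ _ => by positivity
  refine h2.of_nonneg_of_le (fun k => by positivity) fun k => ?_
  have := bracket_le_wt_sq k
  calc (1 + (k : ℝ) ^ 2) ^ s * ‖a k‖ ^ 2 ≤ ((wt k : ℝ) ^ 2) ^ s * ‖a k‖ ^ 2 := by gcongr
    _ = _ := by ring

lemma MemHs.sob {s : ℕ} {f : ℝ → ℝ} (h : MemHs s f) : SobSummable s (fc f) := h.2.2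

lemma MemHs.eq_eser {s : ℕ} (hs : 4 ≤ s) {f : ℝ → ℝ} (h : MemHs s f) (x : ℝ) :
    (f x : ℂ) = eser (fc f) x :=
  eser_fc h.1 h.2.1 (wnorm_ne_top_of_le (Nat.zero_le 3) (h.sob.wnorm_three hs)) x

/-- Weighted `ℓ¹` distances are small along a curve that is continuous in `H^s`. -/
lemma ContInHs.exists_wnorm_le {s : ℕ} (hs : 4 ≤ s) {A : Set ℝ} {u : ℝ → ℝ → ℝ}
    (hu : ContInHs s A u) (hm : ∀ t ∈ A, MemHs s (u t)) {t₀ : ℝ} (ht₀ : t₀ ∈ A) {η : ℝ}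
    (hη : 0 < η) :
    ∃ δ > 0, ∀ t ∈ A, |t - t₀| < δ → wnorm 3 (fc (u t) - fc (u t₀)) ≤ ENNReal.ofReal η := by
  obtain ⟨C, hC, h⟩ := exists_wnorm_le_sob (E := ℂ) 3
  obtain ⟨δ, hδ, hd⟩ := hu t₀ ht₀ (η / (C + 1)) (by positivity)
  refine ⟨δ, hδ, fun t ht htt => ?_⟩
  have hsub : fc (fun x => u t x - u t₀ x) = fc (u t) - fc (u t₀) :=
    funext fun k => fc_sub (hm t ht).1 (hm t₀ ht₀).1 k
  have h1 := hd t ht htt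
  rw [hsNorm_eq, hsub] at h1
  have hS := (hm t ht).sob.sub (hm t₀ ht₀).sob
  refine (h _ (hS.mono hs fun _ => le_rfl)).trans (ENNReal.ofReal_le_ofReal ?_)
  have h2 := Real.sqrt_le_sqrt (sobSq_mono (s' := 3 + 1) hs hS fun _ => le_rfl)
  have h3 : C * √(sobSq (3 + 1) (fc (u t) - fc (u t₀))) ≤ (C + 1) * (η / (C + 1)) := by
    gcongr
    · linarith
    · exact h2.trans h1.le
  rwa [mul_div_cancel₀ _ (by positivity)] at h3

end Sobolev

section Duhamel

open scoped ENNReal NNReal BoundedContinuousFunction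
open MeasureTheory Set

/-- Projection of the real line onto `[0,T]`. -/
noncomputable def clamp (T t : ℝ) : ℝ := max 0 (min t T)

lemma continuous_clamp (T : ℝ) : Continuous (clamp T) := by unfold clamp; fun_prop

lemma clamp_mem {T : ℝ} (hT : 0 ≤ T) (t : ℝ) : clamp T t ∈ Icc 0 T :=
  ⟨le_max_left _ _, max_le hT (min_le_right _ _)⟩

lemma clamp_of_mem {T t : ℝ} (ht : t ∈ Icc 0 T) : clamp T t = t := by
  rw [clamp, min_eq_left ht.2, max_eq_right ht.1]

lemma continuous_comp_clamp {T : ℝ} (hT : 0 ≤ T) {G : ℝ → ℂ} (hG : ContinuousOn G (Icc 0 T)) :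
    Continuous fun t => G (clamp T t) :=
  hG.comp_continuous (continuous_clamp T) (clamp_mem hT)

/-- A function given by an integral on `[0,T]` extends to a function differentiable at every point
of `[0,T]`. -/
lemma exists_hasDerivAt_extension {y G : ℝ → ℂ} {T : ℝ} (hT : 0 ≤ T)
    (hG : ContinuousOn G (Icc 0 T)) (h : ∀ t ∈ Icc 0 T, y t = y 0 + ∫ σ in (0:ℝ)..t, G σ) :
    ∃ Y : ℝ → ℂ, (∀ t ∈ Icc 0 T, Y t = y t) ∧ ∀ t ∈ Icc 0 T, HasDerivAt Y (G t) t := by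
  have hc := continuous_comp_clamp hT hG
  refine ⟨fun t => y 0 + ∫ σ in (0:ℝ)..t, G (clamp T σ), fun t ht => ?_, fun t ht => ?_⟩
  · refine (congrArg (y 0 + ·) (intervalIntegral.integral_congr (μ := volume)
      fun σ hσ => ?_)).trans (h t ht).symm
    rw [uIcc_of_le ht.1] at hσ
    simp only [clamp_of_mem (T := T) (t := σ) ⟨hσ.1, hσ.2.trans ht.2⟩]
  · have := (hc.integral_hasStrictDerivAt 0 t).hasDerivAt.const_add (y 0)
    rwa [clamp_of_mem ht] at this

/-- The solution at time `τ` of `y' = l y + f`, `y 0 = z`. -/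
noncomputable def duhamel (l z : ℂ) (f : ℝ → ℂ) (τ : ℝ) : ℂ :=
  Complex.exp (τ * l) * (z + ∫ σ in (0:ℝ)..τ, Complex.exp (-σ * l) * f σ)

lemma hasDerivAt_duhamel (l z : ℂ) {f : ℝ → ℂ} (hf : Continuous f) (τ : ℝ) :
    HasDerivAt (duhamel l z f) (l * duhamel l z f τ + f τ) τ := by
  have h1 : HasDerivAt (fun τ : ℝ => Complex.exp (τ * l)) (Complex.exp (τ * l) * l) τ := by
    have h := ((hasDerivAt_id τ).ofReal_comp.mul_const l).cexp
    simpa using h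
  have hc : Continuous fun σ : ℝ => Complex.exp (-σ * l) * f σ := by fun_prop
  have h2 := (hc.integral_hasStrictDerivAt 0 τ).hasDerivAt.const_add z
  convert! h1.mul h2 using 1
  have h3 : Complex.exp (τ * l) * Complex.exp (-τ * l) = 1 := by
    rw [← Complex.exp_add]; simp
  unfold duhamel
  linear_combination (-f τ) * h3

lemma continuous_duhamel (l z : ℂ) {f : ℝ → ℂ} (hf : Continuous f) : Continuous (duhamel l z f) :=
  continuous_iff_continuousAt.2 fun τ => (hasDerivAt_duhamel l z hf τ).continuousAt

lemma duhamel_zero (l z : ℂ) (f : ℝ → ℂ) : duhamel l z f 0 = z := by simp [duhamel]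

lemma duhamel_eq_integral (l z : ℂ) {f : ℝ → ℂ} (hf : Continuous f) (t : ℝ) :
    duhamel l z f t = z + ∫ σ in (0:ℝ)..t, (l * duhamel l z f σ + f σ) := by
  rw [intervalIntegral.integral_eq_sub_of_hasDerivAt (fun τ _ => hasDerivAt_duhamel l z hf τ),
    duhamel_zero]
  · ring
  · exact (((continuous_duhamel l z hf).const_mul l).add hf).intervalIntegrable _ _

/-- The factor gained from the decay of the semigroup. -/
noncomputable def gain (μ T : ℝ) : ℝ := ∫ σ in (0:ℝ)..T, Real.exp (-(μ * σ))

lemma gain_nonneg (μ : ℝ) {T : ℝ} (hT : 0 ≤ T) : 0 ≤ gain μ T :=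
  intervalIntegral.integral_nonneg hT fun _ _ => (Real.exp_pos _).le

lemma gain_le {μ T : ℝ} (hμ : 0 ≤ μ) (hT : 0 ≤ T) : gain μ T ≤ T := by
  have h := intervalIntegral.integral_mono_on (μ := volume) (f := fun σ => Real.exp (-(μ * σ)))
    (g := fun _ => (1 : ℝ)) hT (Continuous.intervalIntegrable (by fun_prop) _ _)
    (by simp) (fun σ hσ => Real.exp_le_one_iff.2 (by have := mul_nonneg hμ hσ.1; linarith))
  simpa [gain] using h

lemma gain_mono {μ T T' : ℝ} (hT : 0 ≤ T) (h : T ≤ T') : gain μ T ≤ gain μ T' :=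
  intervalIntegral.integral_mono_interval le_rfl hT h
    (Filter.Eventually.of_forall fun _ => (Real.exp_pos _).le)
    (Continuous.intervalIntegrable (by fun_prop) _ _)

lemma mul_gain_le {μ T : ℝ} : μ * gain μ T ≤ 1 := by
  have h : ∀ σ ∈ uIcc 0 T, HasDerivAt (fun σ => -Real.exp (-(μ * σ)))
      (μ * Real.exp (-(μ * σ))) σ := by
    intro σ _
    have := ((((hasDerivAt_id σ).const_mul μ).fun_neg).exp).fun_neg
    simpa [mul_comm] using this
  rw [gain, ← intervalIntegral.integral_const_mul,
    intervalIntegral.integral_eq_sub_of_hasDerivAt h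
      (Continuous.intervalIntegrable (by fun_prop) _ _)]
  simp [(Real.exp_pos _).le]

lemma norm_duhamel_le {l z : ℂ} (hl : l.re ≤ 0) {f : ℝ → ℂ} {M : ℝ}
    (hM : ∀ t, ‖f t‖ ≤ M) {τ T : ℝ} (hτ : τ ∈ Icc 0 T) :
    ‖duhamel l z f τ‖ ≤ ‖z‖ + gain (-l.re) T * M := by
  have hM0 : 0 ≤ M := (norm_nonneg _).trans (hM 0)
  have e : duhamel l z f τ = Complex.exp (τ * l) * z +
      ∫ σ in (0:ℝ)..τ, Complex.exp (((τ - σ : ℝ) : ℂ) * l) * f σ := by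
    rw [duhamel, mul_add, ← intervalIntegral.integral_const_mul]
    congr 1
    refine intervalIntegral.integral_congr fun σ _ => ?_
    rw [← mul_assoc, ← Complex.exp_add]
    congr 2
    push_cast; ring
  rw [e]
  refine (norm_add_le _ _).trans (add_le_add ?_ ?_)
  · rw [norm_mul, Complex.norm_exp]
    refine mul_le_of_le_one_left (norm_nonneg _) (Real.exp_le_one_iff.2 ?_)
    simpa using mul_nonpos_of_nonneg_of_nonpos hτ.1 hl
  · have h1 : ‖∫ σ in (0:ℝ)..τ, Complex.exp (((τ - σ : ℝ) : ℂ) * l) * f σ‖ ≤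
        ∫ σ in (0:ℝ)..τ, Real.exp (-(-l.re * (τ - σ))) * M := by
      refine intervalIntegral.norm_integral_le_of_norm_le hτ.1
        (Filter.Eventually.of_forall fun σ _ => ?_)
        (Continuous.intervalIntegrable (by fun_prop) _ _)
      rw [norm_mul, Complex.norm_exp, Complex.re_ofReal_mul]
      refine mul_le_mul (le_of_eq ?_) (hM σ) (norm_nonneg _) (Real.exp_pos _).le
      congr 1; ring
    refine h1.trans ?_
    rw [intervalIntegral.integral_mul_const,
      intervalIntegral.integral_comp_sub_left (fun x => Real.exp (-(-l.re * x)))]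
    simp only [sub_self, sub_zero]
    exact mul_le_mul_of_nonneg_right (gain_mono hτ.1 hτ.2) hM0

lemma duhamel_sub (l z w : ℂ) {f g : ℝ → ℂ} (hf : Continuous f) (hg : Continuous g) (τ : ℝ) :
    duhamel l z f τ - duhamel l w g τ = duhamel l (z - w) (fun t => f t - g t) τ := by
  have h : ∫ σ in (0:ℝ)..τ, Complex.exp (-σ * l) * (f σ - g σ) =
      (∫ σ in (0:ℝ)..τ, Complex.exp (-σ * l) * f σ) -
        ∫ σ in (0:ℝ)..τ, Complex.exp (-σ * l) * g σ := by
    simp only [mul_sub]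
    exact intervalIntegral.integral_sub (Continuous.intervalIntegrable (by fun_prop) _ _)
      (Continuous.intervalIntegrable (by fun_prop) _ _)
  rw [duhamel, duhamel, duhamel, h]
  ring

lemma star_duhamel (l z : ℂ) (f : ℝ → ℂ) (τ : ℝ) :
    star (duhamel l z f τ) = duhamel (star l) (star z) (fun t => star (f t)) τ := by
  simp only [duhamel, Complex.star_def, map_mul, map_add, ← Complex.exp_conj, Complex.conj_ofReal,
    ← intervalIntegral.intervalIntegral_conj, map_neg]

/-- A solution of the integral form of `y' = l y + g` on `[0,T]` is given by Duhamel's formula. -/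
lemma eq_duhamel {l : ℂ} {y g : ℝ → ℂ} {T : ℝ} (hy : ContinuousOn y (Icc 0 T))
    (hg : ContinuousOn g (Icc 0 T))
    (h : ∀ t ∈ Icc 0 T, y t = y 0 + ∫ σ in (0:ℝ)..t, (l * y σ + g σ)) :
    ∀ t ∈ Icc 0 T, y t = duhamel l (y 0) g t := by
  intro t ht
  have hT : 0 ≤ T := ht.1.trans ht.2
  obtain ⟨Y, hY, hd⟩ := exists_hasDerivAt_extension hT ((hy.const_mul l).add hg) h
  have hsub : uIcc 0 t ⊆ Icc 0 T := by
    rw [uIcc_of_le ht.1]; exact Icc_subset_Icc_right ht.2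
  have hexp : ∀ σ : ℝ, HasDerivAt (fun σ : ℝ => Complex.exp (-σ * l))
      (-l * Complex.exp (-σ * l)) σ := by
    intro σ
    have h := ((hasDerivAt_id σ).ofReal_comp.neg.mul_const l).cexp
    simpa [mul_comm] using h
  have key := intervalIntegral.integral_eq_sub_of_hasDerivAt (a := 0) (b := t)
    (f := fun σ : ℝ => Complex.exp (-σ * l) * Y σ) (f' := fun σ => Complex.exp (-σ * l) * g σ)
    (fun σ hσ => by
      convert! (hexp σ).mul (hd σ (hsub hσ)) using 1
      rw [hY σ (hsub hσ), Pi.add_apply]; ring)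
    (((Continuous.continuousOn (by fun_prop)).mul (hg.mono hsub)).intervalIntegrable)
  rw [duhamel, key, hY t ht, hY 0 ⟨le_rfl, hT⟩]
  have h3 : Complex.exp (t * l) * Complex.exp (-t * l) = 1 := by
    rw [← Complex.exp_add]; simp
  simp only [Complex.ofReal_zero, neg_zero, zero_mul, Complex.exp_zero, one_mul]
  linear_combination (-y t) * h3

end Duhamel

section Gain

lemma wt_le_two_mul {k : ℤ} (hk : 1 ≤ |(k : ℝ)|) : (wt k : ℝ) ≤ 2 * |(k : ℝ)| := by
  rw [coe_wt]; linarith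

lemma abs_pow_four_eq (k : ℤ) : |(k : ℝ)| ^ 4 = (k : ℝ) ^ 4 := by
  rw [show 4 = 2 * 2 by rfl, pow_mul, sq_abs, ← pow_mul]

lemma exists_wt_pow_three_mul_gain_le {ε η : ℝ} (hε : 0 < ε) (hη : 0 < η) :
    ∃ T : ℝ, 0 < T ∧ T ≤ 1 ∧ ∀ k : ℤ, (wt k : ℝ) ^ 3 * gain (ε * (k : ℝ) ^ 4) T ≤ η := by
  set N : ℝ := 8 / (ε * η) + 1 with hN
  have hN1 : 1 ≤ N := by rw [hN]; have : 0 < 8 / (ε * η) := by positivity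
                         linarith
  refine ⟨min 1 (η / (1 + N) ^ 3), lt_min one_pos (by positivity), min_le_left _ _, fun k => ?_⟩
  set T := min 1 (η / (1 + N) ^ 3)
  have hT : 0 ≤ T := le_min zero_le_one (by positivity)
  have hg := gain_nonneg (ε * (k : ℝ) ^ 4) hT
  rcases le_total |(k : ℝ)| N with h | h
  · have h1 : gain (ε * (k : ℝ) ^ 4) T ≤ η / (1 + N) ^ 3 :=
      (gain_le (by positivity) hT).trans (min_le_right _ _)
    calc (wt k : ℝ) ^ 3 * gain (ε * (k : ℝ) ^ 4) T ≤ (1 + N) ^ 3 * (η / (1 + N) ^ 3) := by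
          rw [coe_wt]; gcongr
      _ = η := by field_simp
  · have hk : 1 ≤ |(k : ℝ)| := hN1.trans h
    have h2 := mul_gain_le (μ := ε * (k : ℝ) ^ 4) (T := T)
    rw [← abs_pow_four_eq] at h2 hg ⊢
    set x := |(k : ℝ)|
    set g := gain (ε * x ^ 4) T
    have h3 : 8 ≤ ε * η * x := by
      have : 8 / (ε * η) ≤ x := by linarith
      rw [div_le_iff₀ (by positivity)] at this
      linarith
    have h4 : (wt k : ℝ) ^ 3 ≤ (2 * x) ^ 3 := by gcongr; exact wt_le_two_mul hk
    have h5 : 8 * (x ^ 3 * g) ≤ η * 1 := by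
      calc 8 * (x ^ 3 * g) ≤ (ε * η * x) * (x ^ 3 * g) := by gcongr
        _ = η * (ε * x ^ 4 * g) := by ring
        _ ≤ η * 1 := by gcongr
    calc (wt k : ℝ) ^ 3 * g ≤ (2 * x) ^ 3 * g := by gcongr
      _ = 8 * (x ^ 3 * g) := by ring
      _ ≤ η := by linarith

lemma exists_wt_pow_four_mul_gain_le {ε : ℝ} (hε : 0 < ε) :
    ∃ C : ℝ, 0 ≤ C ∧ ∀ T, 0 ≤ T → T ≤ 1 →
      ∀ k : ℤ, (wt k : ℝ) ^ 4 * gain (ε * (k : ℝ) ^ 4) T ≤ C := by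
  refine ⟨1 + 16 / ε, by positivity, fun T hT hT1 k => ?_⟩
  have hg := gain_nonneg (ε * (k : ℝ) ^ 4) hT
  by_cases h : k = 0
  · have h1 := gain_le (μ := ε * (k : ℝ) ^ 4) (by positivity) hT
    have h2 : (0 : ℝ) < 16 / ε := by positivity
    subst h
    simp only [coe_wt, Int.cast_zero, abs_zero, add_zero, one_pow, one_mul] at h1 ⊢
    exact (h1.trans hT1).trans (by linarith)
  · have hk : 1 ≤ |(k : ℝ)| := by exact_mod_cast Int.one_le_abs h
    have h2 := mul_gain_le (μ := ε * (k : ℝ) ^ 4) (T := T)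
    rw [← abs_pow_four_eq] at h2 hg ⊢
    set x := |(k : ℝ)|
    set g := gain (ε * x ^ 4) T
    have h4 : (wt k : ℝ) ^ 4 ≤ (2 * x) ^ 4 := by gcongr; exact wt_le_two_mul hk
    calc (wt k : ℝ) ^ 4 * g ≤ (2 * x) ^ 4 * g := by gcongr
      _ = 16 / ε * (ε * x ^ 4 * g) := by field_simp; ring
      _ ≤ 16 / ε * 1 := by gcongr
      _ ≤ _ := by linarith

end Gain

section FixedPoint

open scoped ENNReal NNReal
open Set

lemma wnorm_zero_lp {B : Type*} [NormedAddCommGroup B] (f : lp (fun _ : ℤ => B) 1) :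
    wnorm 0 (f : ℤ → B) = ‖f‖ₑ := by
  have hs : Summable fun k => ‖f k‖ := by simpa using (lp.memℓp f).summable (by simp)
  have h : ‖f‖ = ∑' k, ‖f k‖ := by
    rw [lp.norm_eq_tsum_rpow (by simp) f]; simp
  rw [← ofReal_norm, h, ENNReal.ofReal_tsum_of_nonneg (fun k => norm_nonneg _) hs]
  simp [wnorm]

/-- Contraction principle in `ℓ¹(ℤ, B)`. -/
lemma exists_fixedPoint_wnorm {B : Type*} [NormedAddCommGroup B] [CompleteSpace B]
    {Ψ : (ℤ → B) → ℤ → B} {P : (ℤ → B) → Prop} {K : ℝ≥0} (hP : IsClosed {f | P f}) (hP0 : P 0)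
    (hmap : ∀ f, wnorm 0 f ≤ K → P f → wnorm 0 (Ψ f) ≤ K ∧ P (Ψ f))
    (hlip : ∀ f g, wnorm 0 f ≤ K → wnorm 0 g ≤ K →
      wnorm 0 (Ψ f - Ψ g) ≤ ((1 / 2 : ℝ≥0) : ℝ≥0∞) * wnorm 0 (f - g)) :
    ∃ f, wnorm 0 f ≤ K ∧ P f ∧ Ψ f = f := by
  classical
  have hmem : ∀ f : ℤ → B, wnorm 0 f ≤ K → Memℓp f 1 := fun f hf => by
    refine (memℓp_gen_iff (by simp)).2 ?_
    simpa using summable_norm_of_wnorm (ne_top_of_le_ne_top ENNReal.coe_ne_top hf)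
  let Φ : lp (fun _ : ℤ => B) 1 → lp (fun _ : ℤ => B) 1 :=
    fun f => if h : Memℓp (Ψ f) 1 then ⟨Ψ f, h⟩ else 0
  let S : Set (lp (fun _ : ℤ => B) 1) := {f | wnorm 0 (f : ℤ → B) ≤ K ∧ P f}
  have hΦ : ∀ f ∈ S, (Φ f : ℤ → B) = Ψ f := fun f hf => by
    simp only [Φ, dif_pos (hmem _ (hmap _ hf.1 hf.2).1)]
  have hmaps : MapsTo Φ S S := fun f hf => by
    simp only [S, mem_ofPred_eq, hΦ f hf]
    exact hmap _ hf.1 hf.2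
  have hcl : IsClosed S := by
    refine IsClosed.inter ?_ (hP.preimage lp.uniformContinuous_coe.continuous)
    simp only [wnorm_zero_lp]
    exact isClosed_le continuous_enorm continuous_const
  have hcontr : ContractingWith (1 / 2) (hmaps.restrict Φ S S) := by
    refine ⟨by rw [← NNReal.coe_lt_coe]; norm_num, fun f g => ?_⟩
    have h := hlip f.1 g.1 f.2.1 g.2.1
    rw [← hΦ _ f.2, ← hΦ _ g.2, ← lp.coeFn_sub, ← lp.coeFn_sub, wnorm_zero_lp,
      wnorm_zero_lp, ← edist_eq_enorm_sub, ← edist_eq_enorm_sub] at h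
    exact h
  have h0 : (0 : lp (fun _ : ℤ => B) 1) ∈ S := by
    refine ⟨?_, ?_⟩
    · rw [lp.coeFn_zero, wnorm_zero]; exact zero_le
    · rw [lp.coeFn_zero]; exact hP0
  obtain ⟨f, hf, hfix, -⟩ := hcontr.exists_fixedPoint' hcl.isComplete hmaps h0 (edist_ne_top _ _)
  exact ⟨f, hf.1, hf.2, by rw [← hΦ f hf, hfix]⟩

end FixedPoint

section LocalExistence

open scoped ENNReal NNReal BoundedContinuousFunction
open MeasureTheory Set

/-- The Duhamel operator with values in bounded continuous functions of time. -/
noncomputable def duhB {T : ℝ} (hT : 0 ≤ T) {l : ℂ} (hl : l.re ≤ 0) (z : ℂ) (f : ℝ →ᵇ ℂ) :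
    ℝ →ᵇ ℂ :=
  BoundedContinuousFunction.ofNormedAddCommGroup (fun t => duhamel l z f (clamp T t))
    ((continuous_duhamel l z f.continuous).comp (continuous_clamp T))
    (‖z‖ + gain (-l.re) T * ‖f‖)
    fun t => norm_duhamel_le hl f.norm_coe_le_norm (clamp_mem hT t)

lemma duhB_apply {T : ℝ} (hT : 0 ≤ T) {l : ℂ} (hl : l.re ≤ 0) (z : ℂ) (f : ℝ →ᵇ ℂ) (t : ℝ) :
    duhB hT hl z f t = duhamel l z f (clamp T t) := rfl

lemma norm_duhB_le {T : ℝ} (hT : 0 ≤ T) {l : ℂ} (hl : l.re ≤ 0) (z : ℂ) (f : ℝ →ᵇ ℂ) :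
    ‖duhB hT hl z f‖ ≤ ‖z‖ + gain (-l.re) T * ‖f‖ :=
  BoundedContinuousFunction.norm_ofNormedAddCommGroup_le _
    (by have := gain_nonneg (-l.re) hT; positivity) _

lemma duhB_sub {T : ℝ} (hT : 0 ≤ T) {l : ℂ} (hl : l.re ≤ 0) (z : ℂ) (f g : ℝ →ᵇ ℂ) :
    duhB hT hl z f - duhB hT hl z g = duhB hT hl 0 (f - g) := by
  ext t
  rw [BoundedContinuousFunction.sub_apply, duhB_apply, duhB_apply, duhB_apply,
    duhamel_sub l z z f.continuous g.continuous, sub_self]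
  rfl

lemma ofReal_norm_add_le {z g n p : ℝ} (hz : 0 ≤ z) (hg : 0 ≤ g) (hn : 0 ≤ n) (h : p ≤ z + g * n) :
    ENNReal.ofReal p ≤ ENNReal.ofReal z + ENNReal.ofReal g * ENNReal.ofReal n := by
  rw [← ENNReal.ofReal_mul hg, ← ENNReal.ofReal_add hz (by positivity)]
  exact ENNReal.ofReal_le_ofReal h

variable {ε : ℝ} {l : ℤ → ℂ}

lemma wnorm_le_of_gain {E F G : Type*} [NormedAddCommGroup E] [NormedAddCommGroup F]
    [NormedAddCommGroup G] {g : ℤ → ℝ} (hg : ∀ k, 0 ≤ g k) {p : ℕ} {η : ℝ≥0}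
    (hη : ∀ k, (wt k : ℝ) ^ p * g k ≤ η) {u : ℤ → E} {z : ℤ → F} {f : ℤ → G}
    (h : ∀ k, ‖u k‖ ≤ ‖z k‖ + g k * ‖f k‖) (r : ℕ) :
    wnorm (r + p) u ≤ wnorm (r + p) z + η * wnorm r f := by
  unfold wnorm
  rw [← ENNReal.tsum_mul_left, ← ENNReal.tsum_add]
  refine ENNReal.tsum_le_tsum fun k => ?_
  have h1 := ofReal_norm_add_le (norm_nonneg _) (hg k) (norm_nonneg _) (h k)
  rw [ofReal_norm, ofReal_norm, ofReal_norm] at h1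
  have h2 : (wt k : ℝ≥0∞) ^ p * ENNReal.ofReal (g k) ≤ η := by
    have := ENNReal.ofReal_le_ofReal (hη k)
    rw [ENNReal.ofReal_mul (by positivity), ENNReal.ofReal_pow (by positivity)] at this
    simpa using this
  calc (wt k : ℝ≥0∞) ^ (r + p) * ‖u k‖ₑ
      ≤ (wt k : ℝ≥0∞) ^ (r + p) * (‖z k‖ₑ + ENNReal.ofReal (g k) * ‖f k‖ₑ) := by gcongr
    _ = (wt k : ℝ≥0∞) ^ (r + p) * ‖z k‖ₑ +
        ((wt k : ℝ≥0∞) ^ p * ENNReal.ofReal (g k)) * ((wt k : ℝ≥0∞) ^ r * ‖f k‖ₑ) := by ring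
    _ ≤ _ := by gcongr

lemma Nseq_apply_apply (j0 : ℕ) (lam : Fin j0 → ℝ) (a b c d : Fin j0 → ℕ) {u : ℤ → ℝ →ᵇ ℂ}
    (hu : wnorm 3 u ≠ ⊤) (n : ℤ) (t : ℝ) :
    Nseq j0 lam a b c d u n t = Nseq j0 lam a b c d (fun k => u k t) n :=
  map_Nseq (BoundedContinuousFunction.evalCLM ℂ t) (fun _ _ => rfl) rfl j0 lam a b c d hu n

lemma wnorm_apply_le (r : ℕ) (u : ℤ → ℝ →ᵇ ℂ) (t : ℝ) : wnorm r (fun k => u k t) ≤ wnorm r u :=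
  wnorm_congr_norm r fun k => (u k).norm_coe_le_norm t

/-- The nonlinearity preserves Hermitian symmetry. -/
lemma Nseq_neg_index (j0 : ℕ) (lam : Fin j0 → ℝ) (a b c d : Fin j0 → ℕ) {u : ℤ → ℂ}
    (hu : wnorm 3 u ≠ ⊤) (hs : ∀ k, u (-k) = star (u k)) (k : ℤ) :
    Nseq j0 lam a b c d u (-k) = star (Nseq j0 lam a b c d u k) := by
  have h := (fc_Nfun j0 lam a b c d hu (f := fun x => (eser u x).re) (eser_re hs)).2
  rw [← h, ← h, fc_neg_index]

/-- `U` is a curve of Fourier coefficients solving the equation mode by mode on `[0,T]`. -/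
structure ModeSol (l : ℤ → ℂ) (j0 : ℕ) (lam : Fin j0 → ℝ) (a b c d : Fin j0 → ℕ) (s : ℕ) (T : ℝ)
    (U : ℤ → ℝ →ᵇ ℂ) : Prop where
  herm : ∀ k t, U (-k) t = star (U k t)
  sob : SobSummable s U
  eq : ∀ k, ∀ t ∈ Icc 0 T,
    U k t = U k 0 + ∫ σ in (0:ℝ)..t, (l k * U k σ + Nseq j0 lam a b c d U k σ)

/-- Local existence, with a lifespan controlled by a weighted `ℓ¹` norm of the data. -/
lemma exists_modeSol (hε : 0 < ε) (hre : ∀ k, (l k).re = -(ε * (k : ℝ) ^ 4))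
    (hstar : ∀ k, l (-k) = star (l k)) (j0 : ℕ) (lam : Fin j0 → ℝ) (a b c d : Fin j0 → ℕ)
    {s : ℕ} (hs : 4 ≤ s) (M : ℝ≥0) :
    ∃ T : ℝ, 0 < T ∧ ∀ z : ℤ → ℂ, (∀ k, z (-k) = star (z k)) → wnorm 3 z ≤ M →
      SobSummable s z → ∃ U, ModeSol l j0 lam a b c d s T U ∧ ∀ k, U k 0 = z k := by
  have hl : ∀ k, (l k).re ≤ 0 := fun k => by
    rw [hre]; have : 0 ≤ ε * (k : ℝ) ^ 4 := by positivity
    linarith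
  have hN := losesThree_Nseq (B := ℝ →ᵇ ℂ) j0 lam a b c d
  obtain ⟨K, hK⟩ := hN.lip (M + 1)
  set η : ℝ≥0 := 1 / (2 * (K + 1)) with hηdef
  have hηK : η * K ≤ 1 / 2 := by
    rw [hηdef, ← NNReal.coe_le_coe]
    push_cast
    rw [div_mul_eq_mul_div, div_le_div_iff₀ (by positivity) (by norm_num)]
    linarith [K.coe_nonneg]
  obtain ⟨T, hT, hT1, hg⟩ := exists_wt_pow_three_mul_gain_le hε (η := η)
    (by rw [hηdef]; positivity)
  obtain ⟨C, hC, hg4⟩ := exists_wt_pow_four_mul_gain_le hε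
  specialize hg4 T hT.le hT1
  refine ⟨T, hT, fun z hz hzM hzs => ?_⟩
  have hg0 : ∀ k : ℤ, 0 ≤ gain (ε * (k : ℝ) ^ 4) T := fun k => gain_nonneg _ hT.le
  let D : (ℤ → ℂ) → (ℤ → ℝ →ᵇ ℂ) → ℤ → ℝ →ᵇ ℂ := fun z f k => duhB hT.le (hl k) (z k) (f k)
  have hDn : ∀ z f k, ‖D z f k‖ ≤ ‖z k‖ + gain (ε * (k : ℝ) ^ 4) T * ‖f k‖ := fun z f k => by
    have := norm_duhB_le hT.le (hl k) (z k) (f k)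
    rwa [hre, neg_neg] at this
  have hD : ∀ z f, wnorm 3 (D z f) ≤ wnorm 3 z + η * wnorm 0 f := fun z f =>
    wnorm_le_of_gain hg0 hg (hDn z f) 0
  have hDR : ∀ f, wnorm 0 f ≤ K → wnorm 3 (D z f) ≤ (M + 1 : ℝ≥0) := fun f hf => by
    refine (hD z f).trans ?_
    push_cast
    refine add_le_add hzM ?_
    calc (η : ℝ≥0∞) * wnorm 0 f ≤ η * K := by gcongr
      _ ≤ ((1 / 2 : ℝ≥0) : ℝ≥0∞) := by exact_mod_cast hηK
      _ ≤ 1 := by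
        rw [← ENNReal.coe_one, ENNReal.coe_le_coe, ← NNReal.coe_le_coe]; norm_num
  have hDs : ∀ f g, D z f - D z g = D 0 (f - g) := fun f g => funext fun k => duhB_sub _ _ _ _ _
  have hDtop : ∀ f, wnorm 0 f ≤ K → wnorm 3 (D z f) ≠ ⊤ := fun f hf =>
    ne_top_of_le_ne_top ENNReal.coe_ne_top (hDR f hf)
  have hDherm : ∀ f : ℤ → ℝ →ᵇ ℂ, (∀ k t, f (-k) t = star (f k t)) →
      ∀ k t, D z f (-k) t = star (D z f k t) := fun f hf k t => by
    simp only [D, duhB_apply]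
    rw [star_duhamel, hstar, hz, funext (hf k)]
  obtain ⟨f, hfK, hfh, hfix⟩ := exists_fixedPoint_wnorm (B := ℝ →ᵇ ℂ) (K := K)
    (Ψ := fun f => Nseq j0 lam a b c d (D z f))
    (P := fun f => ∀ k t, f (-k) t = star (f k t))
    (by
      simp only [ofPred_forall]
      refine isClosed_iInter fun k => isClosed_iInter fun t => isClosed_eq ?_ ?_
      · exact (BoundedContinuousFunction.evalCLM ℂ t).continuous.comp (continuous_apply (-k))
      · exact ((BoundedContinuousFunction.evalCLM ℂ t).continuous.comp
          (continuous_apply k)).star)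
    (by simp)
    (fun f hf hfh => ⟨(hK _ _ (hDR f hf) (hDR f hf)).1, fun k t => by
      rw [Nseq_apply_apply _ _ _ _ _ _ (hDtop f hf), Nseq_apply_apply _ _ _ _ _ _ (hDtop f hf)]
      exact Nseq_neg_index _ _ _ _ _ _ (ne_top_of_le_ne_top (hDtop f hf) (wnorm_apply_le _ _ _))
        (fun k => hDherm f hfh k t) k⟩)
    (fun f g hf hg => by
      refine (hK _ _ (hDR f hf) (hDR g hg)).2.trans ?_
      rw [hDs]
      have h := hD 0 (f - g)
      rw [wnorm_zero, zero_add] at h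
      calc (K : ℝ≥0∞) * wnorm 3 (D 0 (f - g)) ≤ K * (η * wnorm 0 (f - g)) := by gcongr
        _ = (η * K : ℝ≥0) * wnorm 0 (f - g) := by push_cast; ring
        _ ≤ _ := by gcongr)
  have hz' : wnorm (s - 1) z ≠ ⊤ := by
    refine SobSummable.wnorm_ne_top ?_
    rwa [Nat.sub_add_cancel (by omega)]
  have hreg : ∀ r, r + 3 ≤ s - 1 → wnorm (r + 3) (D z f) ≠ ⊤ := by
    intro r
    induction r with
    | zero => exact fun _ => hDtop f hfK
    | succ r ih =>
      intro hr
      have hf : wnorm r f ≠ ⊤ := by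
        rw [← hfix]; exact hN.reg r _ (ih (by omega))
      have h := wnorm_le_of_gain hg0 (η := ⟨C, hC⟩) hg4 (hDn z f) r
      rw [show r + 1 + 3 = r + 4 by ring]
      exact ne_top_of_le_ne_top (ENNReal.add_ne_top.2 ⟨wnorm_ne_top_of_le (by omega) hz',
        ENNReal.mul_ne_top ENNReal.coe_ne_top hf⟩) h
  have hf4 : wnorm (s - 4) f ≠ ⊤ := by
    rw [← hfix]; exact hN.reg _ _ (hreg _ (by omega))
  have hsob : SobSummable s (D z f) := by
    have h1 : wnorm s (fun k : ℤ => gain (ε * (k : ℝ) ^ 4) T * ‖f k‖) ≠ ⊤ := by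
      have h := wnorm_le_of_gain (E := ℝ) (F := ℂ) hg0 (η := ⟨C, hC⟩) hg4
        (u := fun k : ℤ => gain (ε * (k : ℝ) ^ 4) T * ‖f k‖) (z := 0) (f := f)
        (fun k => by simp [abs_of_nonneg (hg0 k)]) (s - 4)
      rw [wnorm_zero, zero_add, Nat.sub_add_cancel hs] at h
      exact ne_top_of_le_ne_top (ENNReal.mul_ne_top ENNReal.coe_ne_top hf4) h
    have h2 : SobSummable s fun k => ‖z k‖ := hzs.mono le_rfl fun k => by simp
    refine (h2.add (sobSummable_of_wnorm h1)).mono le_rfl fun k => ?_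
    exact (hDn z f k).trans (le_abs_self _)
  have hD0 : ∀ k, D z f k 0 = z k := fun k => by
    simp only [D]
    rw [duhB_apply, clamp_of_mem ⟨le_rfl, hT.le⟩, duhamel_zero]
  refine ⟨D z f, ⟨hDherm f hfh, hsob, fun k t ht => ?_⟩, hD0⟩
  rw [hD0, show Nseq j0 lam a b c d (D z f) = f from hfix]
  have h1 : ∀ σ ∈ Icc 0 T, D z f k σ = duhamel (l k) (z k) (f k) σ := fun σ hσ => by
    simp only [D]
    rw [duhB_apply, clamp_of_mem hσ]
  rw [h1 t ht, duhamel_eq_integral _ _ (f k).continuous]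
  congr 1
  refine intervalIntegral.integral_congr fun σ hσ => ?_
  rw [uIcc_of_le ht.1] at hσ
  simp only [h1 σ ⟨hσ.1, hσ.2.trans ht.2⟩]

end LocalExistence

section Uniqueness

open scoped ENNReal NNReal
open MeasureTheory Set

lemma exists_wt_pow_three_le {ε η : ℝ} (hε : 0 < ε) (hη : 0 < η) :
    ∃ q : ℝ, 0 ≤ q ∧ ∀ k : ℤ, (wt k : ℝ) ^ 3 ≤ η * (q + ε * (k : ℝ) ^ 4) := by
  set N : ℝ := 8 / (ε * η) + 1 with hN
  have hN1 : 1 ≤ N := by rw [hN]; have : 0 < 8 / (ε * η) := by positivity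
                         linarith
  refine ⟨(1 + N) ^ 3 / η, by positivity, fun k => ?_⟩
  rw [mul_add, mul_div_cancel₀ _ hη.ne', ← abs_pow_four_eq]
  rcases le_total |(k : ℝ)| N with h | h
  · have h1 : (wt k : ℝ) ^ 3 ≤ (1 + N) ^ 3 := by rw [coe_wt]; gcongr
    have : 0 ≤ η * (ε * |(k : ℝ)| ^ 4) := by positivity
    linarith
  · set x := |(k : ℝ)|
    have hk : 1 ≤ x := hN1.trans h
    have h3 : 8 ≤ ε * η * x := by
      have : 8 / (ε * η) ≤ x := by linarith
      rw [div_le_iff₀ (by positivity)] at this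
      linarith
    have h6 : (0 : ℝ) ≤ (1 + N) ^ 3 := by positivity
    calc (wt k : ℝ) ^ 3 ≤ (2 * x) ^ 3 := by gcongr; exact wt_le_two_mul hk
      _ = 8 * x ^ 3 := by ring
      _ ≤ (ε * η * x) * x ^ 3 := by gcongr
      _ = η * (ε * x ^ 4) := by ring
      _ ≤ _ := by linarith

/-- Parabolic smoothing in a time-integrated form with exponential weight. -/
lemma mul_integral_exp_duhamel_le {q μ T : ℝ} {l : ℂ} (hl : l.re = -μ) {g : ℝ → ℂ}
    (hg : Continuous g) (hT : 0 ≤ T) :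
    (q + μ) * ∫ t in (0:ℝ)..T, Real.exp (-(q * t)) * ‖duhamel l 0 g t‖ ≤
      ∫ t in (0:ℝ)..T, Real.exp (-(q * t)) * ‖g t‖ ∨ q + μ < 0 := by
  by_cases hq : q + μ < 0
  · exact Or.inr hq
  refine Or.inl ?_
  push Not at hq
  set G : ℝ → ℝ := fun t => ∫ σ in (0:ℝ)..t, Real.exp (μ * σ) * ‖g σ‖ with hG
  have hGd : ∀ t, HasDerivAt G (Real.exp (μ * t) * ‖g t‖) t := fun t =>
    ((by fun_prop : Continuous fun σ => Real.exp (μ * σ) * ‖g σ‖).integral_hasStrictDerivAt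
      0 t).hasDerivAt
  have hGc : Continuous G := continuous_iff_continuousAt.2 fun t => (hGd t).continuousAt
  have hdc := (continuous_duhamel l 0 hg)
  have hd : ∀ t ∈ uIcc 0 T, HasDerivAt (fun t => Real.exp (-((q + μ) * t)) * G t)
      (Real.exp (-(q * t)) * ‖g t‖ - (q + μ) * (Real.exp (-((q + μ) * t)) * G t)) t := by
    intro t _
    have h1 : HasDerivAt (fun t => Real.exp (-((q + μ) * t)))
        (Real.exp (-((q + μ) * t)) * -(q + μ)) t := by
      simpa using (((hasDerivAt_id t).const_mul (q + μ)).fun_neg).exp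
    convert! h1.mul (hGd t) using 1
    have h2 : Real.exp (-(q * t)) = Real.exp (-((q + μ) * t)) * Real.exp (μ * t) := by
      rw [← Real.exp_add]; congr 1; ring
    rw [h2]; ring
  have key := intervalIntegral.integral_eq_sub_of_hasDerivAt hd
    (Continuous.intervalIntegrable (by fun_prop) _ _)
  rw [intervalIntegral.integral_sub (Continuous.intervalIntegrable (by fun_prop) _ _)
    (Continuous.intervalIntegrable (by fun_prop) _ _), intervalIntegral.integral_const_mul] at key
  have hG0 : G 0 = 0 := by simp [hG]
  have hGT : 0 ≤ G T := intervalIntegral.integral_nonneg hT fun σ _ => by positivity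
  have hGT' : 0 ≤ Real.exp (-((q + μ) * T)) * G T := by positivity
  rw [hG0, mul_zero, sub_zero] at key
  have hle : ∫ t in (0:ℝ)..T, Real.exp (-(q * t)) * ‖duhamel l 0 g t‖ ≤
      ∫ t in (0:ℝ)..T, Real.exp (-((q + μ) * t)) * G t := by
    refine intervalIntegral.integral_mono_on hT (Continuous.intervalIntegrable (by fun_prop) _ _)
      (Continuous.intervalIntegrable (by fun_prop) _ _) fun t ht => ?_
    have h1 : ‖duhamel l 0 g t‖ ≤ Real.exp (-(μ * t)) * G t := by
      rw [duhamel, zero_add, norm_mul, Complex.norm_exp, Complex.re_ofReal_mul, hl]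
      refine mul_le_mul (le_of_eq (by congr 1; ring)) ?_ (norm_nonneg _) (Real.exp_pos _).le
      refine intervalIntegral.norm_integral_le_of_norm_le ht.1
        (Filter.Eventually.of_forall fun σ _ => ?_)
        (Continuous.intervalIntegrable (by fun_prop) _ _)
      rw [norm_mul, Complex.norm_exp, ← Complex.ofReal_neg, Complex.re_ofReal_mul, hl]
      refine le_of_eq ?_
      congr 2; ring
    calc Real.exp (-(q * t)) * ‖duhamel l 0 g t‖
        ≤ Real.exp (-(q * t)) * (Real.exp (-(μ * t)) * G t) := by gcongr
      _ = _ := by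
        rw [← mul_assoc, ← Real.exp_add]; congr 2; ring
  have := mul_le_mul_of_nonneg_left hle hq
  linarith

lemma ofReal_integral_eq_lintegral {f : ℝ → ℝ} (hf : Continuous f) (h0 : ∀ t, 0 ≤ f t) {T : ℝ}
    (hT : 0 ≤ T) :
    ENNReal.ofReal (∫ t in (0:ℝ)..T, f t) = ∫⁻ t in Ioc 0 T, ENNReal.ofReal (f t) := by
  rw [intervalIntegral.integral_of_le hT, ofReal_integral_eq_lintegral_ofReal]
  · exact (hf.integrableOn_Icc).mono_set Ioc_subset_Icc_self
  · exact Filter.Eventually.of_forall h0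

variable {ε : ℝ} {l : ℤ → ℂ}

lemma mode_unique_of_continuous (hε : 0 < ε) (hre : ∀ k, (l k).re = -(ε * (k : ℝ) ^ 4))
    {j0 : ℕ} {lam : Fin j0 → ℝ} {a b c d : Fin j0 → ℕ} {T : ℝ} (hT : 0 < T) {R : ℝ≥0}
    {x y : ℝ → ℤ → ℂ} (hx : ∀ t, wnorm 3 (x t) ≤ R) (hy : ∀ t, wnorm 3 (y t) ≤ R)
    (cx : ∀ k, Continuous fun t => x t k) (cy : ∀ k, Continuous fun t => y t k)
    (cNx : ∀ k, Continuous fun t => Nseq j0 lam a b c d (x t) k)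
    (cNy : ∀ k, Continuous fun t => Nseq j0 lam a b c d (y t) k)
    (ex : ∀ k, ∀ t ∈ Icc 0 T,
      x t k = x 0 k + ∫ σ in (0:ℝ)..t, (l k * x σ k + Nseq j0 lam a b c d (x σ) k))
    (ey : ∀ k, ∀ t ∈ Icc 0 T,
      y t k = y 0 k + ∫ σ in (0:ℝ)..t, (l k * y σ k + Nseq j0 lam a b c d (y σ) k))
    (h0 : x 0 = y 0) : ∀ t ∈ Icc 0 T, x t = y t := by
  obtain ⟨K, hK⟩ := (losesThree_Nseq (B := ℂ) j0 lam a b c d).lip R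
  set η : ℝ≥0 := 1 / (2 * (K + 1)) with hηdef
  have hηK : η * K ≤ 1 / 2 := by
    rw [hηdef, ← NNReal.coe_le_coe]
    push_cast
    rw [div_mul_eq_mul_div, div_le_div_iff₀ (by positivity) (by norm_num)]
    linarith [K.coe_nonneg]
  obtain ⟨q, hq, hqk⟩ := exists_wt_pow_three_le hε (η := η) (by rw [hηdef]; positivity)
  set z : ℝ → ℤ → ℂ := fun t => x t - y t with hzdef
  set g : ℝ → ℤ → ℂ := fun t => Nseq j0 lam a b c d (x t) - Nseq j0 lam a b c d (y t) with hgdef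
  have cz : ∀ k, Continuous fun t => z t k := fun k => (cx k).sub (cy k)
  have cg : ∀ k, Continuous fun t => g t k := fun k => (cNx k).sub (cNy k)
  have hz : ∀ k, ∀ t ∈ Icc 0 T, z t k = duhamel (l k) 0 (fun t => g t k) t := by
    intro k t ht
    have h1 := eq_duhamel (cx k).continuousOn (cNx k).continuousOn (ex k) t ht
    have h2 := eq_duhamel (cy k).continuousOn (cNy k).continuousOn (ey k) t ht
    have h3 := duhamel_sub (l k) (x 0 k) (y 0 k) (cNx k) (cNy k) t
    rw [h0, sub_self] at h3
    simp only [hzdef, Pi.sub_apply]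
    rw [h1, h2, h0]
    exact h3
  have hmode : ∀ k, (wt k : ℝ≥0∞) ^ 3 * ∫⁻ t in Ioc 0 T, ENNReal.ofReal (Real.exp (-(q * t))) * ‖z t k‖ₑ
      ≤ η * ∫⁻ t in Ioc 0 T, ENNReal.ofReal (Real.exp (-(q * t))) * ‖g t k‖ₑ := by
    intro k
    have hc : 0 ≤ q + ε * (k : ℝ) ^ 4 := by positivity
    have h1 := (mul_integral_exp_duhamel_le (q := q) (hre k) (cg k) hT.le).resolve_right hc.not_gt
    have e1 : ∫ t in (0:ℝ)..T, Real.exp (-(q * t)) * ‖duhamel (l k) 0 (fun t => g t k) t‖ =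
        ∫ t in (0:ℝ)..T, Real.exp (-(q * t)) * ‖z t k‖ := by
      refine intervalIntegral.integral_congr fun t ht => ?_
      rw [uIcc_of_le hT.le] at ht
      simp only [hz k t ht]
    rw [e1] at h1
    have h2 : (wt k : ℝ) ^ 3 * ∫ t in (0:ℝ)..T, Real.exp (-(q * t)) * ‖z t k‖ ≤
        η * ∫ t in (0:ℝ)..T, Real.exp (-(q * t)) * ‖g t k‖ := by
      have hnn : 0 ≤ ∫ t in (0:ℝ)..T, Real.exp (-(q * t)) * ‖z t k‖ :=
        intervalIntegral.integral_nonneg hT.le fun _ _ => by positivity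
      calc _ ≤ η * (q + ε * (k : ℝ) ^ 4) * ∫ t in (0:ℝ)..T, Real.exp (-(q * t)) * ‖z t k‖ := by
            gcongr; exact hqk k
        _ ≤ _ := by rw [mul_assoc]; gcongr
    have h3 := ENNReal.ofReal_le_ofReal h2
    rw [ENNReal.ofReal_mul (by positivity), ENNReal.ofReal_mul (by positivity),
      ofReal_integral_eq_lintegral (by have := cz k; fun_prop) (fun t => by positivity) hT.le,
      ofReal_integral_eq_lintegral (by have := cg k; fun_prop) (fun t => by positivity) hT.le,
      ENNReal.ofReal_pow (by positivity), ENNReal.ofReal_coe_nnreal, ENNReal.ofReal_coe_nnreal] at h3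
    have h4 : ∀ (w : ℂ) (t : ℝ), ENNReal.ofReal (Real.exp (-(q * t)) * ‖w‖) =
        ENNReal.ofReal (Real.exp (-(q * t))) * ‖w‖ₑ := fun w t => by
      rw [ENNReal.ofReal_mul (Real.exp_pos _).le, ofReal_norm]
    simpa only [h4] using h3
  have me : ∀ (r : ℕ) (w : ℝ → ℤ → ℂ), (∀ k, Continuous fun t => w t k) →
      ∫⁻ t in Ioc 0 T, ENNReal.ofReal (Real.exp (-(q * t))) * wnorm r (w t) =
      ∑' k, (wt k : ℝ≥0∞) ^ r * ∫⁻ t in Ioc 0 T, ENNReal.ofReal (Real.exp (-(q * t))) * ‖w t k‖ₑ := by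
    intro r w hw
    have hm : ∀ k, Measurable fun t => ENNReal.ofReal (Real.exp (-(q * t))) * ‖w t k‖ₑ := fun k =>
      (ENNReal.measurable_ofReal.comp (by fun_prop : Continuous fun t : ℝ =>
        Real.exp (-(q * t))).measurable).mul (hw k).enorm.measurable
    simp only [wnorm, ← ENNReal.tsum_mul_left]
    rw [lintegral_tsum]
    · refine tsum_congr fun k => ?_
      rw [← lintegral_const_mul _ (hm k)]
      refine lintegral_congr fun t => ?_
      ring
    · intro k
      refine Measurable.aemeasurable ?_
      have : (fun t => ENNReal.ofReal (Real.exp (-(q * t))) * ((wt k : ℝ≥0∞) ^ r * ‖w t k‖ₑ)) =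
          fun t => (wt k : ℝ≥0∞) ^ r * (ENNReal.ofReal (Real.exp (-(q * t))) * ‖w t k‖ₑ) := by
        funext t; ring
      rw [this]
      exact (hm k).const_mul _
  set I := ∫⁻ t in Ioc 0 T, ENNReal.ofReal (Real.exp (-(q * t))) * wnorm 3 (z t) with hI
  have hgz : ∫⁻ t in Ioc 0 T, ENNReal.ofReal (Real.exp (-(q * t))) * wnorm 0 (g t) ≤ K * I := by
    rw [hI, ← lintegral_const_mul' _ _ ENNReal.coe_ne_top]
    refine lintegral_mono fun t => ?_
    calc _ ≤ ENNReal.ofReal (Real.exp (-(q * t))) * (K * wnorm 3 (z t)) := by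
          gcongr; exact (hK _ _ (hx t) (hy t)).2
      _ = _ := by ring
  have hII : I ≤ ((1 / 2 : ℝ≥0) : ℝ≥0∞) * I := by
    calc I ≤ η * ∫⁻ t in Ioc 0 T, ENNReal.ofReal (Real.exp (-(q * t))) * wnorm 0 (g t) := by
          rw [hI, me 3 z cz, me 0 g cg, ← ENNReal.tsum_mul_left]
          refine ENNReal.tsum_le_tsum fun k => ?_
          simpa using hmode k
      _ ≤ η * (K * I) := by gcongr
      _ = (η * K : ℝ≥0) * I := by push_cast; ring
      _ ≤ _ := by gcongr
  have hItop : I ≠ ⊤ := by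
    have : I ≤ ∫⁻ t in Ioc 0 T, (2 * R : ℝ≥0∞) := by
      refine setLIntegral_mono measurable_const fun t ht => ?_
      calc _ ≤ 1 * (R + R : ℝ≥0∞) := by
            gcongr
            · rw [ENNReal.ofReal_le_one, Real.exp_le_one_iff]
              have := mul_nonneg hq ht.1.le
              linarith
            · exact (wnorm_sub_le _ _ _).trans (add_le_add (hx t) (hy t))
        _ = _ := by ring
    refine ne_top_of_le_ne_top ?_ this
    rw [setLIntegral_const]
    exact ENNReal.mul_ne_top (ENNReal.mul_ne_top (by simp) ENNReal.coe_ne_top) (by simp)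
  have hI0 : I = 0 := by
    by_contra hne
    have : ((1 / 2 : ℝ≥0) : ℝ≥0∞) * I < 1 * I := by
      refine ENNReal.mul_lt_mul_left hne hItop ?_
      rw [← ENNReal.coe_one, ENNReal.coe_lt_coe, ← NNReal.coe_lt_coe]; norm_num
    rw [one_mul] at this
    exact absurd hII this.not_ge
  intro t ht
  funext k
  have hk : ∫⁻ t in Ioc 0 T, ENNReal.ofReal (Real.exp (-(q * t))) * ‖z t k‖ₑ = 0 := by
    have h := ENNReal.tsum_eq_zero.1 ((me 3 z cz).symm.trans hI0) k
    refine (mul_eq_zero.1 h).resolve_left (pow_ne_zero _ ?_)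
    exact_mod_cast (wt_pos k).ne'
  have hm : Measurable fun t => ENNReal.ofReal (Real.exp (-(q * t))) * ‖z t k‖ₑ :=
    (ENNReal.measurable_ofReal.comp (by fun_prop : Continuous fun t : ℝ =>
      Real.exp (-(q * t))).measurable).mul (cz k).enorm.measurable
  rw [lintegral_eq_zero_iff hm, Measure.restrict_congr_set Ioc_ae_eq_Icc] at hk
  have hz0 : (fun t => z t k) =ᵐ[volume.restrict (Icc 0 T)] fun _ => 0 := by
    filter_upwards [hk] with t ht
    simpa [(Real.exp_pos _).not_ge] using ht
  have := Measure.eqOn_Icc_of_ae_eq volume hT.ne hz0 (cz k).continuousOn continuousOn_const ht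
  exact sub_eq_zero.1 this

/-- Uniqueness for the equation written mode by mode. -/
lemma mode_unique (hε : 0 < ε) (hre : ∀ k, (l k).re = -(ε * (k : ℝ) ^ 4))
    {j0 : ℕ} {lam : Fin j0 → ℝ} {a b c d : Fin j0 → ℕ} {T : ℝ} (hT : 0 < T) {R : ℝ≥0}
    {x y : ℝ → ℤ → ℂ} (hx : ∀ t ∈ Icc 0 T, wnorm 3 (x t) ≤ R)
    (hy : ∀ t ∈ Icc 0 T, wnorm 3 (y t) ≤ R)
    (cx : ∀ k, ContinuousOn (fun t => x t k) (Icc 0 T))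
    (cy : ∀ k, ContinuousOn (fun t => y t k) (Icc 0 T))
    (cNx : ∀ k, ContinuousOn (fun t => Nseq j0 lam a b c d (x t) k) (Icc 0 T))
    (cNy : ∀ k, ContinuousOn (fun t => Nseq j0 lam a b c d (y t) k) (Icc 0 T))
    (ex : ∀ k, ∀ t ∈ Icc 0 T,
      x t k = x 0 k + ∫ σ in (0:ℝ)..t, (l k * x σ k + Nseq j0 lam a b c d (x σ) k))
    (ey : ∀ k, ∀ t ∈ Icc 0 T,
      y t k = y 0 k + ∫ σ in (0:ℝ)..t, (l k * y σ k + Nseq j0 lam a b c d (y σ) k))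
    (h0 : x 0 = y 0) : ∀ t ∈ Icc 0 T, x t = y t := by
  have hmem := clamp_mem hT.le
  have hclamp0 : clamp T 0 = 0 := clamp_of_mem ⟨le_rfl, hT.le⟩
  have heq : ∀ {x : ℝ → ℤ → ℂ}, (∀ k, ∀ t ∈ Icc 0 T,
      x t k = x 0 k + ∫ σ in (0:ℝ)..t, (l k * x σ k + Nseq j0 lam a b c d (x σ) k)) →
      ∀ k, ∀ t ∈ Icc 0 T, x (clamp T t) k = x (clamp T 0) k + ∫ σ in (0:ℝ)..t,
        (l k * x (clamp T σ) k + Nseq j0 lam a b c d (x (clamp T σ)) k) := by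
    intro x ex k t ht
    rw [hclamp0, clamp_of_mem ht, ex k t ht]
    congr 1
    refine intervalIntegral.integral_congr fun σ hσ => ?_
    rw [uIcc_of_le ht.1] at hσ
    simp only [clamp_of_mem (T := T) (t := σ) ⟨hσ.1, hσ.2.trans ht.2⟩]
  intro t ht
  have := mode_unique_of_continuous hε hre (x := fun t => x (clamp T t))
    (y := fun t => y (clamp T t)) hT (fun t => hx _ (hmem t)) (fun t => hy _ (hmem t))
    (fun k => continuous_comp_clamp hT.le (cx k)) (fun k => continuous_comp_clamp hT.le (cy k))
    (fun k => continuous_comp_clamp hT.le (cNx k)) (fun k => continuous_comp_clamp hT.le (cNy k))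
    (heq ex) (heq ey) (by simp only [hclamp0, h0]) t ht
  simpa only [clamp_of_mem ht] using this

end Uniqueness

section TestFunctions

open scoped ENNReal NNReal ContDiff
open MeasureTheory Set

/-- The Fourier symbol of the linear part of the equation. -/
noncomputable def sym (ε γ0 γ1 γ2 : ℝ) (k : ℤ) : ℂ :=
  -(ε * (-Complex.I * k) ^ 4) + γ0 * (-Complex.I * k) ^ 5 + γ1 * (-Complex.I * k) ^ 3
    + γ2 * (-Complex.I * k)

lemma sym_re (ε γ0 γ1 γ2 : ℝ) (k : ℤ) : (sym ε γ0 γ1 γ2 k).re = -(ε * (k : ℝ) ^ 4) := by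
  have h : sym ε γ0 γ1 γ2 k = ((-(ε * (k : ℝ) ^ 4) : ℝ) : ℂ) +
      ((-γ0 * (k : ℝ) ^ 5 + γ1 * (k : ℝ) ^ 3 - γ2 * k : ℝ) : ℂ) * Complex.I := by
    have h2 := Complex.I_sq
    have h3 : Complex.I ^ 3 = -Complex.I := by rw [pow_succ, h2]; ring
    have h4 : Complex.I ^ 4 = 1 := Complex.I_pow_four
    have h5 : Complex.I ^ 5 = Complex.I := by rw [pow_succ, h4, one_mul]
    simp only [sym, mul_pow, neg_pow Complex.I, h3, h4, h5]
    push_cast; ring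
  rw [h, Complex.add_re, Complex.ofReal_re, Complex.re_ofReal_mul, Complex.I_re, mul_zero, add_zero]

lemma sym_neg (ε γ0 γ1 γ2 : ℝ) (k : ℤ) : sym ε γ0 γ1 γ2 (-k) = star (sym ε γ0 γ1 γ2 k) := by
  simp [sym]

variable {ψ : ℝ → ℝ → ℝ}

lemma contDiff_deriv_snd (h : ContDiff ℝ ∞ (Function.uncurry ψ)) :
    ContDiff ℝ ∞ (Function.uncurry fun t x => deriv (ψ t) x) := by
  have h1 : ContDiff ℝ ∞ fun p : ℝ × ℝ => fderiv ℝ (ψ p.1) p.2 :=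
    ContDiff.fderiv (f := fun p : ℝ × ℝ => ψ p.1) (g := fun p => p.2) (m := ∞)
      (h.comp ((contDiff_fst.comp contDiff_fst).prodMk contDiff_snd)) contDiff_snd (by simp)
  exact h1.clm_apply contDiff_const

lemma contDiff_deriv_fst (h : ContDiff ℝ ∞ (Function.uncurry ψ)) :
    ContDiff ℝ ∞ (Function.uncurry fun t x => deriv (fun τ => ψ τ x) t) := by
  have h1 : ContDiff ℝ ∞ fun p : ℝ × ℝ => fderiv ℝ (fun τ => ψ τ p.2) p.1 :=
    ContDiff.fderiv (f := fun (p : ℝ × ℝ) τ => ψ τ p.2) (g := fun p => p.1) (m := ∞)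
      (h.comp (contDiff_snd.prodMk (contDiff_snd.comp contDiff_fst))) contDiff_fst (by simp)
  exact h1.clm_apply contDiff_const

lemma contDiff_iteratedDeriv_snd (h : ContDiff ℝ ∞ (Function.uncurry ψ)) (n : ℕ) :
    ContDiff ℝ ∞ (Function.uncurry fun t x => iteratedDeriv n (ψ t) x) := by
  induction n with
  | zero => simpa using h
  | succ n ih => simpa only [iteratedDeriv_succ] using contDiff_deriv_snd ih

lemma contDiff_slice (h : ContDiff ℝ ∞ (Function.uncurry ψ)) (t : ℝ) : ContDiff ℝ ∞ (ψ t) :=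
  h.comp (contDiff_const.prodMk contDiff_id)

lemma contDiff_slice_fst (h : ContDiff ℝ ∞ (Function.uncurry ψ)) (x : ℝ) :
    ContDiff ℝ ∞ fun t => ψ t x :=
  h.comp (contDiff_id.prodMk contDiff_const)

lemma periodic_iteratedDeriv {f : ℝ → ℝ} {c : ℝ} (hf : Function.Periodic f c) (n : ℕ) :
    Function.Periodic (iteratedDeriv n f) c := by
  intro x
  have h := congrFun (iteratedDeriv_comp_add_const n f c) x
  rwa [funext hf, eq_comm] at h

lemma integral_deriv_mul_ec {f : ℝ → ℝ} (hf : ContDiff ℝ 1 f)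
    (hp : Function.Periodic f (2 * Real.pi)) (k : ℤ) :
    ∫ x in (0:ℝ)..(2 * Real.pi), ec k x * ((deriv f x : ℝ) : ℂ) =
      (-Complex.I * k) * ∫ x in (0:ℝ)..(2 * Real.pi), ec k x * (f x : ℂ) := by
  have hd : Differentiable ℝ f := hf.differentiable one_ne_zero
  have hc' : Continuous (deriv f) := hf.continuous_deriv le_rfl
  rw [intervalIntegral.integral_mul_deriv_eq_deriv_mul
    (u' := fun x => Complex.I * k * ec k x) (v := fun x => (f x : ℂ))
    (fun x _ => hasDerivAt_ec k x) (fun x _ => (hd x).hasDerivAt.ofReal_comp)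
    ((continuous_const.mul (continuous_ec k)).intervalIntegrable _ _)
    ((Complex.continuous_ofReal.comp hc').intervalIntegrable _ _)]
  have h0 : f (2 * Real.pi) = f 0 := by simpa using hp 0
  rw [ec_two_pi, h0, sub_self, zero_sub, ← intervalIntegral.integral_const_mul,
    ← intervalIntegral.integral_neg]
  refine intervalIntegral.integral_congr fun x _ => ?_
  ring

lemma integral_iteratedDeriv_mul_ec {f : ℝ → ℝ} (hf : ContDiff ℝ ∞ f)
    (hp : Function.Periodic f (2 * Real.pi)) (k : ℤ) (n : ℕ) :
    ∫ x in (0:ℝ)..(2 * Real.pi), ec k x * ((iteratedDeriv n f x : ℝ) : ℂ) =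
      (-Complex.I * k) ^ n * ∫ x in (0:ℝ)..(2 * Real.pi), ec k x * (f x : ℂ) := by
  induction n with
  | zero => simp
  | succ n ih =>
    have hn : ContDiff ℝ ∞ (iteratedDeriv n f) := by
      rw [iteratedDeriv_eq_iterate]; exact hf.iterate_deriv n
    rw [iteratedDeriv_succ, integral_deriv_mul_ec (hn.of_le (by norm_cast))
      (periodic_iteratedDeriv hp n), ih, pow_succ']
    ring

/-- Parseval's identity against a continuous function. -/
lemma hasSum_integral_eser_mul {a : ℤ → ℂ} (ha : wnorm 0 a ≠ ⊤) {f : ℝ → ℝ}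
    (hf : ∀ x, (f x : ℂ) = eser a x) {g : ℝ → ℝ} (hg : Continuous g) :
    HasSum (fun k => a k * ∫ x in (0:ℝ)..(2 * Real.pi), ec k x * (g x : ℂ))
      (∫ x in (0:ℝ)..(2 * Real.pi), f x * g x : ℝ) := by
  obtain ⟨C, hC⟩ := isCompact_Icc.exists_bound_of_continuousOn
    (s := Icc 0 (2 * Real.pi)) hg.continuousOn
  have h := hasSum_integral_of_norm_le (F := fun k x => a k * (ec k x * (g x : ℂ)))
    (A := fun k => ‖a k‖ * C) (a := 0) (b := 2 * Real.pi) (by positivity)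
    (fun k => (continuous_const.mul
      ((continuous_ec k).mul (Complex.continuous_ofReal.comp hg))).continuousOn)
    ((summable_norm_of_wnorm ha).mul_right C) (fun k x hx => by
      rw [norm_mul, norm_mul, norm_ec, one_mul, Complex.norm_real]
      gcongr
      exact hC x hx)
  simp only [intervalIntegral.integral_const_mul] at h
  convert! h using 1
  rw [← intervalIntegral.integral_ofReal]
  refine intervalIntegral.integral_congr fun x _ => ?_
  simp only [Complex.ofReal_mul, hf, eser, ← tsum_mul_right, mul_assoc]

/-- Differentiation in time of the Fourier coefficients of a smooth function. -/
lemma hasDerivAt_integral_ec_mul (h : ContDiff ℝ ∞ (Function.uncurry ψ)) (k : ℤ) (t : ℝ) :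
    HasDerivAt (fun t => ∫ x in (0:ℝ)..(2 * Real.pi), ec k x * (ψ t x : ℂ))
      (∫ x in (0:ℝ)..(2 * Real.pi), ec k x * ((deriv (fun τ => ψ τ x) t : ℝ) : ℂ)) t := by
  have hc : Continuous (Function.uncurry fun t x => deriv (fun τ => ψ τ x) t) :=
    (contDiff_deriv_fst h).continuous
  obtain ⟨C, hC⟩ := (isCompact_Icc.prod isCompact_Icc).exists_bound_of_continuousOn
    (s := Icc (t - 1) (t + 1) ×ˢ Icc 0 (2 * Real.pi)) hc.continuousOn
  have hs : Icc (t - 1) (t + 1) ∈ nhds t := Icc_mem_nhds (by linarith) (by linarith)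
  have hcx : ∀ t, Continuous fun x => ec k x * (ψ t x : ℂ) := fun t =>
    (continuous_ec k).mul (Complex.continuous_ofReal.comp (contDiff_slice h t).continuous)
  refine (intervalIntegral.hasDerivAt_integral_of_dominated_loc_of_deriv_le
    (F := fun t x => ec k x * (ψ t x : ℂ))
    (F' := fun t x => ec k x * ((deriv (fun τ => ψ τ x) t : ℝ) : ℂ)) (bound := fun _ => C) hs
    (Filter.Eventually.of_forall fun t => (hcx t).aestronglyMeasurable)
    ((hcx t).intervalIntegrable _ _) ?_ ?_ (by simp) ?_).2
  · exact ((continuous_ec k).mul (Complex.continuous_ofReal.comp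
      (hc.comp (Continuous.prodMk_right t)))).aestronglyMeasurable
  · refine Filter.Eventually.of_forall fun x hx τ hτ => ?_
    rw [uIoc_of_le (by positivity)] at hx
    rw [norm_mul, norm_ec, one_mul, Complex.norm_real]
    exact hC (τ, x) ⟨hτ, hx.1.le, hx.2⟩
  · refine Filter.Eventually.of_forall fun x _ τ _ => ?_
    exact (((contDiff_slice_fst h x).differentiable (by simp) τ).hasDerivAt.ofReal_comp).const_mul _

end TestFunctions

section ModeSolIsSolution

open scoped ENNReal NNReal ContDiff BoundedContinuousFunction
open MeasureTheory Set

lemma wnorm_apply_ne_top {r : ℕ} {U : ℤ → ℝ →ᵇ ℂ} (hU : wnorm r U ≠ ⊤) (t : ℝ) :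
    wnorm r (fun k => U k t) ≠ ⊤ := ne_top_of_le_ne_top hU (wnorm_apply_le r U t)

lemma fc_of_modes {U : ℤ → ℝ →ᵇ ℂ} (hU : wnorm 3 U ≠ ⊤) {t : ℝ} {f : ℝ → ℝ}
    (hf : ∀ x, (f x : ℂ) = eser (fun k => U k t) x) : fc f = fun k => U k t :=
  funext fun k => fc_of_eser (wnorm_ne_top_of_le (Nat.zero_le 3) (wnorm_apply_ne_top hU t)) hf k

lemma contDiff_periodic_of_modes {U : ℤ → ℝ →ᵇ ℂ} (hU : wnorm 3 U ≠ ⊤) {t : ℝ} {f : ℝ → ℝ}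
    (hf : ∀ x, (f x : ℂ) = eser (fun k => U k t) x) :
    ContDiff ℝ 3 f ∧ Function.Periodic f (2 * Real.pi) := by
  refine ⟨contDiff_of_eser hf 3 (wnorm_apply_ne_top hU t), fun x => ?_⟩
  have := eser_periodic (fun k => U k t) x
  rw [← hf, ← hf] at this
  exact_mod_cast this

lemma memHs_of_modes {s : ℕ} (hs : 4 ≤ s) {U : ℤ → ℝ →ᵇ ℂ} (hU : SobSummable s U) {t : ℝ}
    {f : ℝ → ℝ} (hf : ∀ x, (f x : ℂ) = eser (fun k => U k t) x) : MemHs s f := by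
  have hU3 := hU.wnorm_three hs
  have h := contDiff_periodic_of_modes hU3 hf
  refine ⟨h.1.continuous, h.2, ?_⟩
  rw [fc_of_modes hU3 hf]
  exact hU.mono le_rfl fun k => (U k).norm_coe_le_norm t

lemma contInHs_of_modes {s : ℕ} (hs : 4 ≤ s) {U : ℤ → ℝ →ᵇ ℂ} (hU : SobSummable s U) {A : Set ℝ}
    {u : ℝ → ℝ → ℝ} (hu : ∀ t ∈ A, ∀ x, (u t x : ℂ) = eser (fun k => U k t) x) :
    ContInHs s A u := by
  intro t₀ ht₀ η hη
  have hU3 := hU.wnorm_three hs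
  have h1 : Filter.Tendsto (fun t => √(sobSq s fun k => U k t - U k t₀)) (nhds t₀)
      (nhds √(∑' k : ℤ, (1 + (k : ℝ) ^ 2) ^ s * ‖U k t₀ - U k t₀‖ ^ 2)) := by
    refine Filter.Tendsto.sqrt ?_
    refine tendsto_tsum_of_dominated_convergence (Summable.mul_left 4 hU)
      (fun k => ?_) (Filter.Eventually.of_forall fun t k => ?_)
    · have : Continuous fun t => (1 + (k : ℝ) ^ 2) ^ s * ‖U k t - U k t₀‖ ^ 2 := by fun_prop
      exact this.tendsto t₀
    · have h2 : ‖U k t - U k t₀‖ ≤ 2 * ‖U k‖ := by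
        have := norm_sub_le (U k t) (U k t₀)
        linarith [(U k).norm_coe_le_norm t, (U k).norm_coe_le_norm t₀]
      rw [Real.norm_of_nonneg (by positivity)]
      calc _ ≤ (1 + (k : ℝ) ^ 2) ^ s * (2 * ‖U k‖) ^ 2 := by gcongr
        _ = _ := by ring
  simp only [sub_self, norm_zero, ne_eq, OfNat.ofNat_ne_zero, not_false_eq_true, zero_pow,
    mul_zero, tsum_zero, Real.sqrt_zero] at h1
  obtain ⟨δ, hδ, hd⟩ := Metric.eventually_nhds_iff.1 (h1.eventually_lt_const hη)
  refine ⟨δ, hδ, fun t ht htt => ?_⟩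
  rw [hsNorm_eq]
  have hc := fun t (ht : t ∈ A) => (contDiff_periodic_of_modes hU3 (hu t ht)).1.continuous
  have hfc : fc (fun x => u t x - u t₀ x) = fun k => U k t - U k t₀ := funext fun k => by
    rw [fc_sub (hc t ht) (hc t₀ ht₀), fc_of_modes hU3 (hu t ht), fc_of_modes hU3 (hu t₀ ht₀)]
  rw [hfc]
  exact hd htt

variable {ε γ0 γ1 γ2 : ℝ} {ψ : ℝ → ℝ → ℝ}

/-- The image of a test function under the formal adjoint of the linear operator. -/
noncomputable def adj (ε γ0 γ1 γ2 : ℝ) (ψ : ℝ → ℝ → ℝ) (t x : ℝ) : ℝ :=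
  deriv (fun τ : ℝ => ψ τ x) t - ε * iteratedDeriv 4 (ψ t) x + γ0 * iteratedDeriv 5 (ψ t) x
    + γ1 * iteratedDeriv 3 (ψ t) x + γ2 * deriv (ψ t) x

lemma continuous_adj (h : ContDiff ℝ ∞ (Function.uncurry ψ)) :
    Continuous (Function.uncurry (adj ε γ0 γ1 γ2 ψ)) := by
  have h0 := (contDiff_deriv_fst h).continuous
  have h1 := (contDiff_deriv_snd h).continuous
  have h2 := fun n => (contDiff_iteratedDeriv_snd h n).continuous
  exact (((h0.sub (continuous_const.mul (h2 4))).add (continuous_const.mul (h2 5))).add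
    (continuous_const.mul (h2 3))).add (continuous_const.mul h1)

lemma integral_ec_mul_adj (h : ContDiff ℝ ∞ (Function.uncurry ψ))
    (hp : ∀ t, Function.Periodic (ψ t) (2 * Real.pi)) (k : ℤ) (t : ℝ) :
    ∫ x in (0:ℝ)..(2 * Real.pi), ec k x * (adj ε γ0 γ1 γ2 ψ t x : ℂ) =
      (∫ x in (0:ℝ)..(2 * Real.pi), ec k x * ((deriv (fun τ => ψ τ x) t : ℝ) : ℂ)) +
      sym ε γ0 γ1 γ2 k * ∫ x in (0:ℝ)..(2 * Real.pi), ec k x * (ψ t x : ℂ) := by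
  have hi := fun n => integral_iteratedDeriv_mul_ec (contDiff_slice h t) (hp t) k n
  have hint : ∀ (c : ℝ) (f : ℝ → ℝ), Continuous f →
      IntervalIntegrable (fun x => (c : ℂ) * (ec k x * (f x : ℂ))) volume 0 (2 * Real.pi) :=
    fun c f hf => (continuous_const.mul
      ((continuous_ec k).mul (Complex.continuous_ofReal.comp hf))).intervalIntegrable _ _
  have h0 : Continuous fun x => deriv (fun τ => ψ τ x) t :=
    (contDiff_deriv_fst h).continuous.comp (Continuous.prodMk_right t)
  have h2 : ∀ n, Continuous fun x => iteratedDeriv n (ψ t) x := fun n =>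
    (contDiff_iteratedDeriv_snd h n).continuous.comp (Continuous.prodMk_right t)
  have e : ∀ x, ec k x * (adj ε γ0 γ1 γ2 ψ t x : ℂ) =
      ((1 : ℝ) : ℂ) * (ec k x * ((deriv (fun τ => ψ τ x) t : ℝ) : ℂ)) +
      ((-ε : ℝ) : ℂ) * (ec k x * ((iteratedDeriv 4 (ψ t) x : ℝ) : ℂ)) +
      (γ0 : ℂ) * (ec k x * ((iteratedDeriv 5 (ψ t) x : ℝ) : ℂ)) +
      (γ1 : ℂ) * (ec k x * ((iteratedDeriv 3 (ψ t) x : ℝ) : ℂ)) +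
      (γ2 : ℂ) * (ec k x * ((iteratedDeriv 1 (ψ t) x : ℝ) : ℂ)) := fun x => by
    rw [adj, iteratedDeriv_one]; push_cast; ring
  simp only [e]
  rw [intervalIntegral.integral_add ((((hint _ _ h0).add (hint _ _ (h2 4))).add
      (hint _ _ (h2 5))).add (hint _ _ (h2 3))) (hint _ _ (h2 1)),
    intervalIntegral.integral_add (((hint _ _ h0).add (hint _ _ (h2 4))).add
      (hint _ _ (h2 5))) (hint _ _ (h2 3)),
    intervalIntegral.integral_add ((hint _ _ h0).add (hint _ _ (h2 4))) (hint _ _ (h2 5)),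
    intervalIntegral.integral_add (hint _ _ h0) (hint _ _ (h2 4))]
  simp only [intervalIntegral.integral_const_mul, hi, sym]
  push_cast; ring

/-- A solution of the equation mode by mode is a distributional solution. -/
lemma ModeSol.isSolutionReg {j0 : ℕ} {lam : Fin j0 → ℝ} {a b c d : Fin j0 → ℕ} {s : ℕ}
    (hs : 4 ≤ s) {T : ℝ} (hT : 0 ≤ T) {U : ℤ → ℝ →ᵇ ℂ}
    (hU : ModeSol (sym ε γ0 γ1 γ2) j0 lam a b c d s T U) {u : ℝ → ℝ → ℝ}
    (hu : ∀ t ∈ Icc 0 T, ∀ x, (u t x : ℂ) = eser (fun k => U k t) x) :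
    IsSolutionReg ε γ0 γ1 γ2 j0 lam a b c d 0 T u := by
  have hU3 := hU.sob.wnorm_three hs
  have hU0 : wnorm 0 U ≠ ⊤ := wnorm_ne_top_of_le (Nat.zero_le 3) hU3
  have hN0 : wnorm 0 (Nseq j0 lam a b c d U) ≠ ⊤ :=
    (losesThree_Nseq (B := ℝ →ᵇ ℂ) j0 lam a b c d).reg 0 U hU3
  refine ⟨fun t ht => contDiff_periodic_of_modes hU3 (hu t ht), fun ψ hψ hp h0 => ?_⟩
  have hψc := hψ.continuous
  have hgc : Continuous (Function.uncurry (adj ε γ0 γ1 γ2 ψ)) := continuous_adj hψ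
  have hslice : ∀ {g : ℝ → ℝ → ℝ}, Continuous (Function.uncurry g) → ∀ t, Continuous (g t) :=
    fun hg t => hg.comp (Continuous.prodMk_right t)
  have hsl : ∀ {g : ℝ → ℝ → ℝ}, Continuous (Function.uncurry g) → ∀ k : ℤ, Continuous fun t =>
      ∫ x in (0:ℝ)..(2 * Real.pi), ec k x * (g t x : ℂ) := fun {g} hg k =>
    intervalIntegral.continuous_parametric_intervalIntegral_of_continuous'
      (f := fun t x => ec k x * (g t x : ℂ)) (((continuous_ec k).comp continuous_snd).mul
        (Complex.continuous_ofReal.comp hg)) _ _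
  have hbd : ∀ {g : ℝ → ℝ → ℝ}, Continuous (Function.uncurry g) → ∃ C : ℝ, ∀ k : ℤ, ∀ t ∈ Icc 0 T,
      ‖∫ x in (0:ℝ)..(2 * Real.pi), ec k x * (g t x : ℂ)‖ ≤ C := by
    intro g hg
    obtain ⟨C, hC⟩ := (isCompact_Icc.prod isCompact_Icc).exists_bound_of_continuousOn
      (s := Icc 0 T ×ˢ Icc 0 (2 * Real.pi)) hg.continuousOn
    refine ⟨C * |2 * Real.pi - 0|, fun k t ht => ?_⟩
    refine intervalIntegral.norm_integral_le_of_norm_le_const fun x hx => ?_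
    rw [uIoc_of_le (by positivity)] at hx
    rw [norm_mul, norm_ec, one_mul, Complex.norm_real]
    exact hC (t, x) ⟨ht, hx.1.le, hx.2⟩
  obtain ⟨C1, hC1⟩ := hbd hgc
  obtain ⟨C2, hC2⟩ := hbd hψc
  set P : ℤ → ℝ → ℂ := fun k t => ∫ x in (0:ℝ)..(2 * Real.pi), ec k x * (ψ t x : ℂ) with hP
  set G : ℤ → ℝ → ℂ := fun k t =>
    ∫ x in (0:ℝ)..(2 * Real.pi), ec k x * (adj ε γ0 γ1 γ2 ψ t x : ℂ) with hG
  set F : ℤ → ℝ → ℂ := fun k t => U k t * G k t + Nseq j0 lam a b c d U k t * P k t with hF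
  have hsum := hasSum_integral_of_norm_le (F := F)
    (A := fun k => ‖U k‖ * C1 + ‖Nseq j0 lam a b c d U k‖ * C2) hT
    (fun k => (((U k).continuous.mul (hsl hgc k)).add
      ((Nseq j0 lam a b c d U k).continuous.mul (hsl hψc k))).continuousOn)
    (((summable_norm_of_wnorm hU0).mul_right _).add ((summable_norm_of_wnorm hN0).mul_right _))
    (fun k t ht => by
      refine (norm_add_le _ _).trans ?_
      rw [norm_mul, norm_mul]
      have h1 := (U k).norm_coe_le_norm t
      have h2 := (Nseq j0 lam a b c d U k).norm_coe_le_norm t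
      have h3 := hC1 k t ht
      have h4 := hC2 k t ht
      gcongr)
  have hzero : ∀ k, ∫ t in (0:ℝ)..T, F k t = 0 := by
    intro k
    obtain ⟨Y, hY, hYd⟩ := exists_hasDerivAt_extension hT
      (((U k).continuous.const_mul (sym ε γ0 γ1 γ2 k)).add
        (Nseq j0 lam a b c d U k).continuous).continuousOn (hU.eq k)
    have hPd := hasDerivAt_integral_ec_mul hψ k
    have hcont : Continuous (Function.uncurry fun t x => deriv (fun τ => ψ τ x) t) :=
      (contDiff_deriv_fst hψ).continuous
    have key := intervalIntegral.integral_deriv_mul_eq_sub (a := 0) (b := T) (u := Y) (v := P k)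
      (fun t ht => hYd t (by rwa [uIcc_of_le hT] at ht)) (fun t _ => hPd t)
      ((((U k).continuous.const_mul (sym ε γ0 γ1 γ2 k)).add
        (Nseq j0 lam a b c d U k).continuous).intervalIntegrable _ _)
      ((hsl hcont k).intervalIntegrable _ _)
    have hP0 : ∀ t, t ∉ Ioo 0 T → P k t = 0 := fun t ht => by simp [hP, h0 t ht]
    rw [hP0 T (by simp), hP0 0 (by simp), mul_zero, mul_zero, sub_zero] at key
    rw [← key]
    refine intervalIntegral.integral_congr fun t ht => ?_
    rw [uIcc_of_le hT] at ht
    simp only [hF, hG, hY t ht]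
    rw [integral_ec_mul_adj hψ hp]
    simp only [hP, Pi.add_apply]
    ring
  have hinner : ∀ t ∈ Icc 0 T, ((∫ x in (0:ℝ)..(2 * Real.pi),
      (u t x * adj ε γ0 γ1 γ2 ψ t x + Nfun j0 lam a b c d (u t) x * ψ t x) : ℝ) : ℂ) =
      ∑' k, F k t := by
    intro t ht
    have ht0 := wnorm_apply_ne_top hU0 t
    have hNt := (fc_Nfun j0 lam a b c d (wnorm_apply_ne_top hU3 t) (hu t ht)).1
    have hNt0 := (losesThree_Nseq (B := ℂ) j0 lam a b c d).reg 0 _ (wnorm_apply_ne_top hU3 t)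
    have h1 := hasSum_integral_eser_mul ht0 (hu t ht) (hslice hgc t)
    have h2 := hasSum_integral_eser_mul hNt0 hNt (hslice hψc t)
    have h3 := (h1.add h2).tsum_eq
    have hNc : Continuous (Nfun j0 lam a b c d (u t)) := by
      have := continuous_eser hNt0
      rw [← funext hNt] at this
      exact Complex.continuous_re.comp this
    have huc : Continuous (u t) := (contDiff_periodic_of_modes hU3 (hu t ht)).1.continuous
    have h4 := intervalIntegral.integral_add (a := 0) (b := 2 * Real.pi) (μ := volume)
      ((huc.mul (hslice hgc t)).intervalIntegrable _ _)
      ((hNc.mul (hslice hψc t)).intervalIntegrable _ _)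
    refine (congrArg Complex.ofReal h4).trans ?_
    rw [Complex.ofReal_add]
    refine h3.symm.trans (tsum_congr fun k => ?_)
    simp only [hF, Nseq_apply_apply j0 lam a b c d hU3]
    rfl
  have hfin : ∫ t in (0:ℝ)..T, ((∫ x in (0:ℝ)..(2 * Real.pi),
      (u t x * adj ε γ0 γ1 γ2 ψ t x + Nfun j0 lam a b c d (u t) x * ψ t x) : ℝ) : ℂ) = 0 := by
    have h1 := hsum.tsum_eq
    simp only [hzero, tsum_zero] at h1
    rw [h1]
    refine intervalIntegral.integral_congr fun t ht => ?_
    rw [uIcc_of_le hT] at ht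
    exact hinner t ht
  rw [intervalIntegral.integral_ofReal] at hfin
  exact_mod_cast hfin

end ModeSolIsSolution

section WeakToModes

open scoped ENNReal NNReal ContDiff
open MeasureTheory Set

/-- A primitive of a smooth function with zero mean, supported in an interval. -/
lemma exists_primitive {θ : ℝ → ℝ} {T : ℝ} (hθ : ContDiff ℝ ∞ θ) (hs : ∀ t ∉ Ioo 0 T, θ t = 0)
    (hm : ∫ t in (0:ℝ)..T, θ t = 0) :
    ∃ χ : ℝ → ℝ, ContDiff ℝ ∞ χ ∧ (∀ t ∉ Ioo 0 T, χ t = 0) ∧ ∀ t, HasDerivAt χ (θ t) t := by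
  have hd : ∀ t, HasDerivAt (fun t => ∫ σ in (0:ℝ)..t, θ σ) (θ t) t := fun t =>
    (hθ.continuous.integral_hasStrictDerivAt 0 t).hasDerivAt
  refine ⟨fun t => ∫ σ in (0:ℝ)..t, θ σ, ?_, fun t ht => ?_, hd⟩
  · rw [contDiff_infty_iff_deriv]
    refine ⟨fun t => (hd t).differentiableAt, ?_⟩
    rwa [show deriv (fun t => ∫ σ in (0:ℝ)..t, θ σ) = θ from funext fun t => (hd t).deriv]
  · rcases le_or_gt t 0 with h0 | h0
    · refine (intervalIntegral.integral_congr (g := fun _ => 0) fun σ hσ => ?_).trans (by simp)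
      rw [uIcc_of_ge h0] at hσ
      exact hs σ fun h => absurd h.1 hσ.2.not_gt
    · have hT : T ≤ t := by
        by_contra h
        exact ht ⟨h0, not_le.1 h⟩
      show ∫ σ in (0:ℝ)..t, θ σ = 0
      rw [← intervalIntegral.integral_add_adjacent_intervals
        (hθ.continuous.intervalIntegrable 0 T) (hθ.continuous.intervalIntegrable T t), hm, zero_add]
      refine (intervalIntegral.integral_congr (g := fun _ => 0) fun σ hσ => ?_).trans (by simp)
      rw [uIcc_of_le hT] at hσ
      exact hs σ fun h => absurd h.2 hσ.1.not_gt

/-- The lemma of du Bois-Reymond. -/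
lemma exists_eq_const_of_integral_deriv_mul {w : ℝ → ℂ} (hw : Continuous w) {T : ℝ} (hT : 0 < T)
    (h : ∀ χ θ : ℝ → ℝ, ContDiff ℝ ∞ χ → Continuous θ → (∀ t ∉ Ioo 0 T, χ t = 0) →
      (∀ t, HasDerivAt χ (θ t) t) → ∫ t in (0:ℝ)..T, (θ t : ℂ) * w t = 0) :
    ∃ C, ∀ t ∈ Icc 0 T, w t = C := by
  let β : ContDiffBump (T / 2) := ⟨T / 8, T / 4, by positivity, by linarith⟩
  set η : ℝ → ℝ := β.normed volume with hη
  have hηd : ContDiff ℝ ∞ η := β.contDiff_normed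
  have hηs : ∀ t ∉ Ioo 0 T, η t = 0 := by
    intro t ht
    by_contra hne
    have h1 : t ∈ Function.support η := hne
    rw [hη, β.support_normed_eq, Real.ball_eq_Ioo] at h1
    have h2 := h1.1
    have h3 := h1.2
    simp only [β] at h2 h3
    exact ht ⟨by linarith, by linarith⟩
  have hint : ∀ {E : Type} [NormedAddCommGroup E] [NormedSpace ℝ E] {f : ℝ → E},
      (∀ t ∉ Ioo 0 T, f t = 0) → ∫ t in (0:ℝ)..T, f t = ∫ t, f t := fun {E} _ _ {f} hf =>
    intervalIntegral.integral_eq_integral_of_support_subset fun t ht => by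
      by_contra h
      exact ht (hf t fun h' => h (Ioo_subset_Ioc_self h'))
  have hη1 : ∫ t in (0:ℝ)..T, η t = 1 := by rw [hint hηs]; exact β.integral_normed
  set C : ℂ := ∫ t in (0:ℝ)..T, (η t : ℂ) * w t with hC
  have hae : ∀ᵐ t ∂(volume : Measure ℝ), t ∈ Ioo 0 T → w t - C = 0 := by
    refine isOpen_Ioo.ae_eq_zero_of_integral_contDiff_smul_eq_zero
      ((hw.sub continuous_const).locallyIntegrable.locallyIntegrableOn _) fun g hg _ hgs => ?_
    have hg0 : ∀ t ∉ Ioo 0 T, g t = 0 := fun t ht => image_eq_zero_of_notMem_tsupport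
      fun h => ht (hgs h)
    set m : ℝ := ∫ t in (0:ℝ)..T, g t with hm
    have hii : ∀ {f : ℝ → ℝ}, Continuous f → IntervalIntegrable f volume 0 T :=
      fun hf => hf.intervalIntegrable _ _
    have hii' : ∀ {f : ℝ → ℝ} {v : ℝ → ℂ}, Continuous f → Continuous v →
        IntervalIntegrable (fun t => (f t : ℂ) * v t) volume 0 T :=
      fun hf hv => ((Complex.continuous_ofReal.comp hf).mul hv).intervalIntegrable _ _
    have hθd : ContDiff ℝ ∞ fun t => g t - m * η t := hg.sub (contDiff_const.mul hηd)
    obtain ⟨χ, h1, h2, h3⟩ := exists_primitive (T := T) hθd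
      (fun t ht => by simp [hg0 t ht, hηs t ht]) (by
        rw [intervalIntegral.integral_sub (hii hg.continuous)
          ((hii hηd.continuous).const_mul m), intervalIntegral.integral_const_mul, hη1,
          mul_one, sub_self])
    have h4 := h χ _ h1 hθd.continuous h2 h3
    have h5 : ∫ t in (0:ℝ)..T, (g t : ℂ) * w t = m * C := by
      have e : ∀ t, ((g t - m * η t : ℝ) : ℂ) * w t = (g t : ℂ) * w t - m * ((η t : ℂ) * w t) :=
        fun t => by push_cast; ring
      simp only [e] at h4
      rw [intervalIntegral.integral_sub (hii' hg.continuous hw)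
        ((hii' hηd.continuous hw).const_mul _), intervalIntegral.integral_const_mul] at h4
      exact sub_eq_zero.1 h4
    rw [← hint fun t ht => by simp [hg0 t ht]]
    have e : ∀ t, g t • (w t - C) = (g t : ℂ) * w t - (g t : ℂ) * C := fun t => by
      rw [Complex.real_smul]; ring
    simp only [e]
    rw [intervalIntegral.integral_sub (hii' hg.continuous hw)
      (hii' hg.continuous continuous_const), h5, intervalIntegral.integral_mul_const,
      intervalIntegral.integral_ofReal, sub_self]
  refine ⟨C, fun t ht => ?_⟩
  have h2 : w =ᵐ[volume.restrict (Icc 0 T)] fun _ => C := by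
    rw [← Measure.restrict_congr_set Ioo_ae_eq_Icc]
    refine (ae_restrict_iff' measurableSet_Ioo).2 ?_
    filter_upwards [hae] with t h ht using sub_eq_zero.1 (h ht)
  exact Measure.eqOn_Icc_of_ae_eq volume hT.ne h2 hw.continuousOn continuousOn_const ht

lemma eq_add_integral_of_weak {y G : ℝ → ℂ} {T : ℝ} (hT : 0 < T) (hy : ContinuousOn y (Icc 0 T))
    (hG : ContinuousOn G (Icc 0 T))
    (h : ∀ χ θ : ℝ → ℝ, ContDiff ℝ ∞ χ → Continuous θ → (∀ t ∉ Ioo 0 T, χ t = 0) →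
      (∀ t, HasDerivAt χ (θ t) t) → ∫ t in (0:ℝ)..T, ((θ t : ℂ) * y t + (χ t : ℂ) * G t) = 0) :
    ∀ t ∈ Icc 0 T, y t = y 0 + ∫ σ in (0:ℝ)..t, G σ := by
  have hyc := continuous_comp_clamp hT.le hy
  have hGc := continuous_comp_clamp hT.le hG
  have hd : ∀ t, HasDerivAt (fun t => ∫ σ in (0:ℝ)..t, G (clamp T σ)) (G (clamp T t)) t := fun t =>
    (hGc.integral_hasStrictDerivAt 0 t).hasDerivAt
  have hIc : Continuous fun t => ∫ σ in (0:ℝ)..t, G (clamp T σ) :=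
    continuous_iff_continuousAt.2 fun t => (hd t).continuousAt
  obtain ⟨C, hC⟩ := exists_eq_const_of_integral_deriv_mul (hyc.sub hIc) hT (by
    intro χ θ hχ hθ hχ0 hχd
    have h1 := h χ θ hχ hθ hχ0 hχd
    have h2 := intervalIntegral.integral_deriv_mul_eq_sub (a := 0) (b := T)
      (u := fun t => (χ t : ℂ)) (fun t _ => (hχd t).ofReal_comp) (fun t _ => hd t)
      ((Complex.continuous_ofReal.comp hθ).intervalIntegrable _ _) (hGc.intervalIntegrable _ _)
    rw [hχ0 T (by simp), hχ0 0 (by simp)] at h2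
    simp only [Complex.ofReal_zero, zero_mul, sub_zero] at h2
    have h3 : ∫ t in (0:ℝ)..T, ((θ t : ℂ) * y (clamp T t) + (χ t : ℂ) * G (clamp T t)) = 0 := by
      refine Eq.trans (intervalIntegral.integral_congr fun t ht => ?_) h1
      rw [uIcc_of_le hT.le] at ht
      simp only [clamp_of_mem ht]
    have hθc : Continuous fun t => (θ t : ℂ) := Complex.continuous_ofReal.comp hθ
    have hχc : Continuous fun t => (χ t : ℂ) := Complex.continuous_ofReal.comp hχ.continuous
    have h4 := intervalIntegral.integral_sub (μ := volume) (a := 0) (b := T)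
      (((hθc.mul hyc).add (hχc.mul hGc)).intervalIntegrable _ _)
      (((hθc.mul hIc).add (hχc.mul hGc)).intervalIntegrable _ _)
    refine Eq.trans (intervalIntegral.integral_congr fun t _ => ?_)
      (h4.trans ((congrArg₂ (· - ·) h3 h2).trans (sub_self 0)))
    simp only [Pi.add_apply, Pi.mul_apply, Pi.sub_apply]
    ring)
  intro t ht
  have h0 := hC 0 ⟨le_rfl, hT.le⟩
  have h1 := hC t ht
  rw [← h0] at h1
  simp only [Pi.sub_apply, clamp_of_mem ht, clamp_of_mem (T := T) (t := 0) ⟨le_rfl, hT.le⟩,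
    intervalIntegral.integral_same, sub_zero] at h1
  rw [← h1, sub_add_eq_add_sub, eq_sub_iff_add_eq]
  congr 1
  refine intervalIntegral.integral_congr fun σ hσ => ?_
  rw [uIcc_of_le ht.1] at hσ
  simp only [clamp_of_mem (T := T) (t := σ) ⟨hσ.1, hσ.2.trans ht.2⟩]

end WeakToModes

section WeakSolutionModes

open scoped ENNReal NNReal ContDiff
open MeasureTheory Set

lemma contDiff_ec (k : ℤ) : ContDiff ℝ ∞ (ec k) :=
  (contDiff_const.mul Complex.ofRealCLM.contDiff).cexp

lemma iteratedDeriv_re_ec (c : ℂ) (k : ℤ) (n : ℕ) :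
    iteratedDeriv n (fun x => (c * ec k x).re) =
      fun x => ((Complex.I * k) ^ n * c * ec k x).re := by
  induction n with
  | zero => simp
  | succ n ih =>
    rw [iteratedDeriv_succ, ih]
    funext x
    have h := ((hasDerivAt_ec k x).const_mul ((Complex.I * k) ^ n * c))
    have h2 := (Complex.reCLM.hasFDerivAt.comp_hasDerivAt x h).deriv
    refine h2.trans ?_
    simp only [Complex.reCLM_apply]
    congr 1; ring

variable {ε γ0 γ1 γ2 : ℝ} {j0 : ℕ} {lam : Fin j0 → ℝ} {a b c d : Fin j0 → ℕ} {s : ℕ}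

lemma adj_re_ec {χ θ : ℝ → ℝ} (h : ∀ t, HasDerivAt χ (θ t) t) (z : ℂ) (k : ℤ) (t x : ℝ) :
    adj ε γ0 γ1 γ2 (fun t x => (χ t * z * ec (-k) x).re) t x =
      ((θ t + sym ε γ0 γ1 γ2 k * χ t) * z * ec (-k) x).re := by
  have h1 : deriv (fun τ => (χ τ * z * ec (-k) x).re) t = (θ t * z * ec (-k) x).re := by
    have h2 := ((h t).ofReal_comp.mul_const z).mul_const (ec (-k) x)
    exact (Complex.reCLM.hasFDerivAt.comp_hasDerivAt t h2).deriv
  have h3 : deriv (fun x => (χ t * z * ec (-k) x).re) x =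
      (((Complex.I * (-k : ℤ)) ^ 1 * (χ t * z) * ec (-k) x).re) := by
    rw [← iteratedDeriv_one, iteratedDeriv_re_ec]
  simp only [adj, iteratedDeriv_re_ec, h1, h3]
  simp only [← Complex.re_ofReal_mul, ← Complex.add_re, ← Complex.sub_re]
  congr 1
  simp only [sym]
  push_cast
  ring

section Curves

variable {T : ℝ} {v : ℝ → ℝ → ℝ} (hs : 4 ≤ s) (hm : ∀ t ∈ Icc 0 T, MemHs s (v t))
  (hc : ContInHs s (Icc 0 T) v)

include hs hm hc

lemma exists_wnorm_fc_le : ∃ R : ℝ≥0, ∀ t ∈ Icc 0 T, wnorm 3 (fc (v t)) ≤ R := by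
  refine isCompact_Icc.induction_on (p := fun S => ∃ R : ℝ≥0, ∀ t ∈ S, wnorm 3 (fc (v t)) ≤ R)
    ⟨0, by simp⟩ (fun S S' hS ⟨R, hR⟩ => ⟨R, fun t ht => hR t (hS ht)⟩) ?_ fun t₀ ht₀ => ?_
  · rintro S S' ⟨R, hR⟩ ⟨R', hR'⟩
    refine ⟨max R R', fun t ht => ?_⟩
    rcases ht with ht | ht
    · exact (hR t ht).trans (by exact_mod_cast le_max_left R R')
    · exact (hR' t ht).trans (by exact_mod_cast le_max_right R R')
  · obtain ⟨δ, hδ, h⟩ := hc.exists_wnorm_le hs hm ht₀ one_pos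
    have h0 := (hm t₀ ht₀).sob.wnorm_three hs
    refine ⟨Icc 0 T ∩ Metric.ball t₀ δ, inter_mem_nhdsWithin _ (Metric.ball_mem_nhds _ hδ),
      1 + (wnorm 3 (fc (v t₀))).toNNReal, fun t ht => ?_⟩
    have h1 := h t ht.1 ht.2
    calc wnorm 3 (fc (v t)) = wnorm 3 ((fc (v t) - fc (v t₀)) + fc (v t₀)) := by rw [sub_add_cancel]
      _ ≤ _ := wnorm_add_le _ _ _
      _ ≤ _ := by
        rw [ENNReal.coe_add, ENNReal.coe_toNNReal h0]
        gcongr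
        simpa using h1

lemma continuousOn_fc (k : ℤ) : ContinuousOn (fun t => fc (v t) k) (Icc 0 T) := by
  refine Metric.continuousOn_iff.2 fun t₀ ht₀ e he => ?_
  obtain ⟨δ, hδ, h⟩ := hc.exists_wnorm_le hs hm ht₀ (half_pos he)
  refine ⟨δ, hδ, fun t ht htd => ?_⟩
  have h1 := (enorm_le_wnorm 3 (fc (v t) - fc (v t₀)) k).trans (h t ht htd)
  rw [← ofReal_norm, ENNReal.ofReal_le_ofReal_iff (by positivity)] at h1
  rw [dist_eq_norm]
  exact h1.trans_lt (half_lt_self he)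

lemma continuousOn_Nseq_fc (k : ℤ) :
    ContinuousOn (fun t => Nseq j0 lam a b c d (fc (v t)) k) (Icc 0 T) := by
  obtain ⟨R, hR⟩ := exists_wnorm_fc_le hs hm hc
  obtain ⟨K, hK⟩ := (losesThree_Nseq (B := ℂ) j0 lam a b c d).lip R
  refine Metric.continuousOn_iff.2 fun t₀ ht₀ e he => ?_
  obtain ⟨δ, hδ, h⟩ := hc.exists_wnorm_le hs hm ht₀
    (show 0 < e / (K + 1) by positivity)
  refine ⟨δ, hδ, fun t ht htd => ?_⟩
  have h1 := (enorm_le_wnorm 0 _ k).trans (hK _ _ (hR t ht) (hR t₀ ht₀)).2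
  replace h1 := h1.trans (mul_le_mul_right (h t ht htd) _)
  rw [← ENNReal.ofReal_coe_nnreal, ← ENNReal.ofReal_mul K.coe_nonneg, ← ofReal_norm,
    ENNReal.ofReal_le_ofReal_iff (by positivity)] at h1
  rw [dist_eq_norm]
  refine h1.trans_lt ?_
  rw [mul_div_assoc', div_lt_iff₀ (by positivity)]
  nlinarith

/-- The Fourier coefficients of a distributional solution solve the equation mode by mode. -/
lemma IsSolutionReg.modes (hT : 0 < T) (hv : IsSolutionReg ε γ0 γ1 γ2 j0 lam a b c d 0 T v)
    (k : ℤ) : ∀ t ∈ Icc 0 T, fc (v t) k = fc (v 0) k + ∫ σ in (0:ℝ)..t,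
      (sym ε γ0 γ1 γ2 k * fc (v σ) k + Nseq j0 lam a b c d (fc (v σ)) k) := by
  have hcy := continuousOn_fc hs hm hc k
  have hcN := continuousOn_Nseq_fc (j0 := j0) (lam := lam) (a := a) (b := b) (c := c) (d := d)
    hs hm hc k
  refine eq_add_integral_of_weak hT hcy ((continuousOn_const.mul hcy).add hcN)
    fun χ θ hχ hθ hχ0 hχd => ?_
  set Q : ℝ → ℂ := fun t => (θ t : ℂ) * fc (v t) k +
    (χ t : ℂ) * (sym ε γ0 γ1 γ2 k * fc (v t) k + Nseq j0 lam a b c d (fc (v t)) k) with hQ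
  have hQc : ContinuousOn Q (Icc 0 T) :=
    ((Complex.continuous_ofReal.comp hθ).continuousOn.mul hcy).add
      ((Complex.continuous_ofReal.comp hχ.continuous).continuousOn.mul
        ((continuousOn_const.mul hcy).add hcN))
  have key : ∀ z : ℂ, (z * ∫ t in (0:ℝ)..T, Q t).re = 0 := by
    intro z
    have hψ : ContDiff ℝ ∞ (Function.uncurry fun t x => (χ t * z * ec (-k) x).re) :=
      Complex.reCLM.contDiff.comp ((((Complex.ofRealCLM.contDiff.comp hχ).comp contDiff_fst).mul
        contDiff_const).mul ((contDiff_ec (-k)).comp contDiff_snd))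
    have h := hv.2 (fun t x => (χ t * z * ec (-k) x).re) hψ
      (fun t x => by simp only [ec_periodic (-k) x]) (fun t ht x => by simp [hχ0 t ht])
    have hin : ∀ t ∈ Icc 0 T, ∫ x in (0:ℝ)..(2 * Real.pi),
        (v t x * adj ε γ0 γ1 γ2 (fun t x => (χ t * z * ec (-k) x).re) t x +
          Nfun j0 lam a b c d (v t) x * (χ t * z * ec (-k) x).re) =
        2 * Real.pi * (z * Q t).re := by
      intro t ht
      have hw3 := (hm t ht).sob.wnorm_three hs
      have hN := fc_Nfun j0 lam a b c d hw3 ((hm t ht).eq_eser hs)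
      have hNc : Continuous (Nfun j0 lam a b c d (v t)) := by
        have := continuous_eser ((losesThree_Nseq (B := ℂ) j0 lam a b c d).reg 0 _ hw3)
        rw [← funext hN.1] at this
        exact Complex.continuous_re.comp this
      have hvc : Continuous (v t) := (hm t ht).1
      have hi : ∀ f : ℝ → ℝ, ∫ x in (0:ℝ)..(2 * Real.pi), (f x : ℂ) * ec (-k) x =
          (2 * Real.pi : ℝ) * fc f k := fun f => by
        rw [fc_eq, mul_inv_cancel_left₀]
        exact_mod_cast (by positivity : (2 * Real.pi) ≠ 0)
      have hI : ∀ f : ℝ → ℝ, Continuous f → IntervalIntegrable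
          (fun x => (f x : ℂ) * ec (-k) x) volume 0 (2 * Real.pi) := fun f hf =>
        ((Complex.continuous_ofReal.comp hf).mul (continuous_ec _)).intervalIntegrable _ _
      have e1 : ∀ x, v t x * adj ε γ0 γ1 γ2 (fun t x => (χ t * z * ec (-k) x).re) t x +
          Nfun j0 lam a b c d (v t) x * (χ t * z * ec (-k) x).re =
          Complex.reCLM (z * (θ t + sym ε γ0 γ1 γ2 k * χ t) * (v t x * ec (-k) x) +
            z * χ t * (Nfun j0 lam a b c d (v t) x * ec (-k) x)) := fun x => by
        rw [adj_re_ec hχd, Complex.reCLM_apply, ← Complex.re_ofReal_mul,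
          ← Complex.re_ofReal_mul, ← Complex.add_re]
        congr 1; ring
      simp only [e1]
      rw [Complex.reCLM.intervalIntegral_comp_comm
          (((hI _ hvc).const_mul _).add ((hI _ hNc).const_mul _)),
        intervalIntegral.integral_add ((hI _ hvc).const_mul _) ((hI _ hNc).const_mul _),
        intervalIntegral.integral_const_mul, intervalIntegral.integral_const_mul, hi, hi,
        hN.2 k, Complex.reCLM_apply, ← Complex.re_ofReal_mul]
      congr 1
      simp only [hQ]
      ring
    have h2 : ∫ t in (0:ℝ)..T, 2 * Real.pi * (z * Q t).re = 0 := by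
      refine Eq.trans (intervalIntegral.integral_congr fun t ht => ?_) h
      rw [uIcc_of_le hT.le] at ht
      exact (hin t ht).symm
    rw [intervalIntegral.integral_const_mul] at h2
    have h3 := (mul_eq_zero.1 h2).resolve_left (by positivity)
    have hQi : IntervalIntegrable (fun t => z * Q t) volume 0 T :=
      (continuousOn_const.mul hQc).intervalIntegrable_of_Icc hT.le
    have h4 := Complex.reCLM.intervalIntegral_comp_comm hQi
    simp only [Complex.reCLM_apply] at h4
    rw [← intervalIntegral.integral_const_mul, ← h4, h3]
  refine Complex.ext ?_ ?_
  · simpa using key 1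
  · simpa using key Complex.I

end Curves
end WeakSolutionModes

section Gluing

open scoped ENNReal NNReal ContDiff BoundedContinuousFunction
open MeasureTheory Set

variable {l : ℤ → ℂ} {j0 : ℕ} {lam : Fin j0 → ℝ} {a b c d : Fin j0 → ℕ} {s : ℕ} {T T' : ℝ}

lemma ModeSol.restrict {U : ℤ → ℝ →ᵇ ℂ} (hU : ModeSol l j0 lam a b c d s T U) (h : T' ≤ T) :
    ModeSol l j0 lam a b c d s T' U :=
  ⟨hU.herm, hU.sob, fun k t ht => hU.eq k t ⟨ht.1, ht.2.trans h⟩⟩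

/-- The curve which follows `U` up to time `T` and then `V`. -/
noncomputable def glue (T : ℝ) (U V : ℤ → ℝ →ᵇ ℂ) (k : ℤ) : ℝ →ᵇ ℂ :=
  (U k).compContinuous ⟨fun t => min t T, by fun_prop⟩ +
    (V k).compContinuous ⟨fun t => max (t - T) 0, by fun_prop⟩ -
    BoundedContinuousFunction.const ℝ (V k 0)

lemma glue_apply (T : ℝ) (U V : ℤ → ℝ →ᵇ ℂ) (k : ℤ) (t : ℝ) :
    glue T U V k t = U k (min t T) + V k (max (t - T) 0) - V k 0 := rfl

lemma glue_of_le {U V : ℤ → ℝ →ᵇ ℂ} {t : ℝ} (h : t ≤ T) (k : ℤ) : glue T U V k t = U k t := by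
  rw [glue_apply, min_eq_left h, max_eq_right (by linarith), add_sub_cancel_right]

lemma glue_of_ge {U V : ℤ → ℝ →ᵇ ℂ} (h0 : ∀ k, V k 0 = U k T) {t : ℝ} (h : T ≤ t) (k : ℤ) :
    glue T U V k t = V k (t - T) := by
  rw [glue_apply, min_eq_right h, max_eq_left (by linarith), h0, add_sub_cancel_left]

lemma sobSummable_glue {U V : ℤ → ℝ →ᵇ ℂ} (hU : SobSummable s U) (hV : SobSummable s V) :
    SobSummable s (glue T U V) :=
  ((hU.mono le_rfl fun k => (U k).norm_compContinuous_le _).add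
    (hV.mono le_rfl fun k => (V k).norm_compContinuous_le _)).sub
    (hV.mono (b := fun k => BoundedContinuousFunction.const ℝ (V k 0)) le_rfl fun k =>
      (BoundedContinuousFunction.norm_const_le _).trans ((V k).norm_coe_le_norm 0))

/-- A solution on `[0,T]` followed by a solution on `[0,T']` is a solution on `[0,T+T']`. -/
lemma ModeSol.glue (hs : 4 ≤ s) (hT : 0 ≤ T) {U V : ℤ → ℝ →ᵇ ℂ}
    (hU : ModeSol l j0 lam a b c d s T U) (hV : ModeSol l j0 lam a b c d s T' V)
    (h0 : ∀ k, V k 0 = U k T) :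
    ModeSol l j0 lam a b c d s (T + T') (glue T U V) := by
  have hS : SobSummable s (FifthOrderStmt14.glue T U V) := sobSummable_glue hU.sob hV.sob
  have hN := Nseq_apply_apply j0 lam a b c d (hS.wnorm_three hs)
  have hNU := Nseq_apply_apply j0 lam a b c d (hU.sob.wnorm_three hs)
  have hNV := Nseq_apply_apply j0 lam a b c d (hV.sob.wnorm_three hs)
  refine ⟨fun k t => ?_, hS, fun k t ht => ?_⟩
  · simp only [glue_apply, hU.herm, hV.herm, star_add, star_sub]
  have hcont : Continuous fun σ => l k * FifthOrderStmt14.glue T U V k σ +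
      Nseq j0 lam a b c d (FifthOrderStmt14.glue T U V) k σ := by fun_prop
  have hfirst : ∀ t ∈ Icc 0 T, ∫ σ in (0:ℝ)..t, (l k * FifthOrderStmt14.glue T U V k σ +
      Nseq j0 lam a b c d (FifthOrderStmt14.glue T U V) k σ) = U k t - U k 0 := fun t ht => by
    rw [hU.eq k t ht, add_sub_cancel_left]
    refine intervalIntegral.integral_congr fun σ hσ => ?_
    rw [uIcc_of_le ht.1] at hσ
    have hσT := hσ.2.trans ht.2
    simp only [hN, hNU, glue_of_le hσT]
  rw [glue_of_le hT]
  rcases le_total t T with htT | htT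
  · rw [hfirst t ⟨ht.1, htT⟩, glue_of_le htT, add_sub_cancel]
  · rw [← intervalIntegral.integral_add_adjacent_intervals (hcont.intervalIntegrable 0 T)
      (hcont.intervalIntegrable T t), hfirst T ⟨hT, le_rfl⟩, glue_of_ge h0 htT,
      hV.eq k (t - T) ⟨by linarith, by linarith [ht.2]⟩, h0]
    have h2 : ∫ σ in T..t, (l k * FifthOrderStmt14.glue T U V k σ +
        Nseq j0 lam a b c d (FifthOrderStmt14.glue T U V) k σ) =
        ∫ σ in T..t, (fun ρ => l k * V k ρ + Nseq j0 lam a b c d V k ρ) (σ - T) := by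
      refine intervalIntegral.integral_congr fun σ hσ => ?_
      rw [uIcc_of_le htT] at hσ
      simp only [hN, hNV, glue_of_ge h0 hσ.1]
    rw [h2, intervalIntegral.integral_comp_sub_right
      (fun ρ => l k * V k ρ + Nseq j0 lam a b c d V k ρ) T, sub_self]
    ring

end Gluing

section MaximalSolution

open scoped ENNReal NNReal ContDiff BoundedContinuousFunction
open MeasureTheory Set

variable {ε γ0 γ1 γ2 : ℝ} {j0 : ℕ} {lam : Fin j0 → ℝ} {a b c d : Fin j0 → ℕ} {s : ℕ} {T : ℝ}

/-- The real-valued function with Fourier coefficients `U k t` at time `t`. -/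
noncomputable def modeFun (U : ℤ → ℝ →ᵇ ℂ) (t x : ℝ) : ℝ := (eser (fun k => U k t) x).re

lemma ModeSol.modeFun_eq {l : ℤ → ℂ} {U : ℤ → ℝ →ᵇ ℂ} (hU : ModeSol l j0 lam a b c d s T U)
    (t x : ℝ) : (modeFun U t x : ℂ) = eser (fun k => U k t) x :=
  eser_re (fun k => hU.herm k t) x

/-- A distributional solution coincides with the mode-by-mode solution with the same data. -/
lemma IsSolutionReg.fc_eq_of_modeSol (hε : 0 < ε) (hs : 4 ≤ s) (hT : 0 < T) {v : ℝ → ℝ → ℝ}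
    (hv : IsSolutionReg ε γ0 γ1 γ2 j0 lam a b c d 0 T v)
    (hm : ∀ t ∈ Icc 0 T, MemHs s (v t)) (hc : ContInHs s (Icc 0 T) v) {U : ℤ → ℝ →ᵇ ℂ}
    (hU : ModeSol (sym ε γ0 γ1 γ2) j0 lam a b c d s T U) (h0 : ∀ k, U k 0 = fc (v 0) k) :
    ∀ t ∈ Icc 0 T, fc (v t) = fun k => U k t := by
  obtain ⟨R, hR⟩ := exists_wnorm_fc_le hs hm hc
  have hU3 := hU.sob.wnorm_three hs
  have hN := Nseq_apply_apply j0 lam a b c d hU3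
  refine mode_unique hε (sym_re ε γ0 γ1 γ2) hT (R := max R (wnorm 3 U).toNNReal)
    (j0 := j0) (lam := lam) (a := a) (b := b) (c := c) (d := d)
    (y := fun t k => U k t)
    (fun t ht => (hR t ht).trans (by exact_mod_cast le_max_left _ _))
    (fun t _ => (wnorm_apply_le 3 U t).trans ?_) (continuousOn_fc hs hm hc)
    (fun k => (U k).continuous.continuousOn) (continuousOn_Nseq_fc hs hm hc)
    (fun k => ?_) (hv.modes hs hm hc hT) (fun k t ht => ?_) (funext fun k => (h0 k).symm)
  · rw [ENNReal.coe_max, ENNReal.coe_toNNReal hU3]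
    exact le_max_right _ _
  · simp only [← hN]
    exact (Nseq j0 lam a b c d U k).continuous.continuousOn
  · simp only [← hN]
    exact hU.eq k t ht

/-- Every mode-by-mode solution is a continuous `H^s` solution. -/
lemma ModeSol.solution (hs : 4 ≤ s) (hT : 0 ≤ T) {U : ℤ → ℝ →ᵇ ℂ}
    (hU : ModeSol (sym ε γ0 γ1 γ2) j0 lam a b c d s T U) {u : ℝ → ℝ → ℝ}
    (hu : ∀ t ∈ Icc 0 T, u t = modeFun U t) :
    IsSolutionReg ε γ0 γ1 γ2 j0 lam a b c d 0 T u ∧ (∀ t ∈ Icc 0 T, MemHs s (u t)) ∧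
      ContInHs s (Icc 0 T) u := by
  have hu' : ∀ t ∈ Icc 0 T, ∀ x, (u t x : ℂ) = eser (fun k => U k t) x := fun t ht x => by
    rw [hu t ht, hU.modeFun_eq]
  exact ⟨hU.isSolutionReg hs hT hu', fun t ht => memHs_of_modes hs hU.sob (hu' t ht),
    contInHs_of_modes hs hU.sob hu'⟩

lemma ModeSol.eq_of_eq_zero (hε : 0 < ε) (hs : 4 ≤ s) {T' : ℝ} {U V : ℤ → ℝ →ᵇ ℂ}
    (hU : ModeSol (sym ε γ0 γ1 γ2) j0 lam a b c d s T U)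
    (hV : ModeSol (sym ε γ0 γ1 γ2) j0 lam a b c d s T' V) (h0 : ∀ k, U k 0 = V k 0) {t : ℝ}
    (ht : 0 ≤ t) (htT : t ≤ T) (htT' : t ≤ T') (k : ℤ) : U k t = V k t := by
  rcases ht.eq_or_lt with rfl | ht
  · exact h0 k
  have hfc : ∀ t, fc (modeFun U t) = fun k => U k t := fun t =>
    fc_of_modes (hU.sob.wnorm_three hs) (hU.modeFun_eq t)
  obtain ⟨h1, h2, h3⟩ := (hU.restrict htT).solution hs ht.le (u := modeFun U) fun _ _ => rfl
  have h := h1.fc_eq_of_modeSol hε hs ht h2 h3 (hV.restrict htT')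
    (fun k => by rw [hfc]; exact (h0 k).symm) t ⟨ht.le, le_rfl⟩
  rw [hfc] at h
  exact congrFun h k

/-- Existence of a maximal solution, its uniqueness, and the blow-up alternative. -/
lemma exists_maximal_solution (hε : 0 < ε) (hs : 4 ≤ s) {φ : ℝ → ℝ} (hφ : MemHs s φ) :
    ∃ Tmax : ENNReal, 0 < Tmax ∧ ∃ u : ℝ → ℝ → ℝ,
      u 0 = φ ∧
      (∀ T : ℝ, 0 < T → ENNReal.ofReal T < Tmax →
        IsSolutionReg ε γ0 γ1 γ2 j0 lam a b c d 0 T u ∧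
        (∀ t ∈ Set.Icc (0:ℝ) T, MemHs s (u t)) ∧
        ContInHs s (Set.Icc (0:ℝ) T) u) ∧
      (∀ v : ℝ → ℝ → ℝ, ∀ T : ℝ, 0 < T → ENNReal.ofReal T < Tmax → v 0 = φ →
        IsSolutionReg ε γ0 γ1 γ2 j0 lam a b c d 0 T v →
        (∀ t ∈ Set.Icc (0:ℝ) T, MemHs s (v t)) →
        ContInHs s (Set.Icc (0:ℝ) T) v →
        ∀ t ∈ Set.Icc (0:ℝ) T, ∀ x : ℝ, v t x = u t x) ∧
      (Tmax = ⊤ ∨ ∀ M : ℝ, ∃ t₀ : ℝ, 0 ≤ t₀ ∧ ENNReal.ofReal t₀ < Tmax ∧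
        ∀ t : ℝ, t₀ < t → ENNReal.ofReal t < Tmax → M ≤ hsNorm 4 (u t)) := by
  classical
  set P : ℝ → (ℤ → ℝ →ᵇ ℂ) → Prop := fun T U =>
    ModeSol (sym ε γ0 γ1 γ2) j0 lam a b c d s T U ∧ ∀ k, U k 0 = fc φ k with hP
  set S : Set ℝ := {T | 0 < T ∧ ∃ U, P T U} with hS
  have hloc := exists_modeSol (l := sym ε γ0 γ1 γ2) hε (sym_re ε γ0 γ1 γ2) (sym_neg ε γ0 γ1 γ2)
    j0 lam a b c d hs
  obtain ⟨T₀, hT₀⟩ : S.Nonempty := by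
    obtain ⟨τ, hτ, h⟩ := hloc (wnorm 3 (fc φ)).toNNReal
    obtain ⟨U, hU⟩ := h (fc φ) (fc_neg_index φ)
      (ENNReal.coe_toNNReal (hφ.sob.wnorm_three hs)).ge hφ.sob
    exact ⟨τ, hτ, U, hU⟩
  set u : ℝ → ℝ → ℝ := fun t => if h : ∃ U, ∃ T ∈ S, t ≤ T ∧ P T U then modeFun h.choose t else 0
    with hu_def
  have hu : ∀ T U, 0 < T → P T U → ∀ t ∈ Icc 0 T, u t = modeFun U t := by
    intro T U hT hU t ht
    have h : ∃ U, ∃ T ∈ S, t ≤ T ∧ P T U := ⟨U, T, ⟨hT, U, hU⟩, ht.2, hU⟩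
    obtain ⟨T', -, htT', hV⟩ := h.choose_spec
    have h1 : u t = modeFun h.choose t := dif_pos h
    rw [h1]
    funext x
    simp only [modeFun]
    congr 2
    funext k
    exact hV.1.eq_of_eq_zero hε hs hU.1 (fun k => by rw [hV.2, hU.2]) ht.1 htT' ht.2 k
  set Tmax : ℝ≥0∞ := ⨆ T ∈ S, ENNReal.ofReal T with hTmax
  have hle : ∀ T ∈ S, ENNReal.ofReal T ≤ Tmax := fun T hT =>
    le_iSup₂ (f := fun T (_ : T ∈ S) => ENNReal.ofReal T) T hT
  have hlt : ∀ T, ENNReal.ofReal T < Tmax → ∃ T' U, 0 < T' ∧ T < T' ∧ P T' U := by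
    intro T hT
    obtain ⟨T', h⟩ := lt_iSup_iff.1 hT
    obtain ⟨hT', h⟩ := lt_iSup_iff.1 h
    exact ⟨T', hT'.2.choose, hT'.1, (ENNReal.ofReal_lt_ofReal_iff hT'.1).1 h, hT'.2.choose_spec⟩
  have hpos : 0 < Tmax := (ENNReal.ofReal_pos.2 hT₀.1).trans_le (hle _ hT₀)
  refine ⟨Tmax, hpos, u, ?_, fun T hT hTm => ?_, fun v T hT hTm hv0 hv hm hc t ht x => ?_, ?_⟩
  · obtain ⟨hT, U, hU⟩ := hT₀
    rw [hu T₀ U hT hU 0 ⟨le_rfl, hT.le⟩]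
    funext x
    have h1 := hU.1.modeFun_eq 0 x
    rw [funext hU.2, ← hφ.eq_eser hs] at h1
    exact_mod_cast h1
  · obtain ⟨T', U, hT', hTT', hU⟩ := hlt T hTm
    exact (hU.1.restrict hTT'.le).solution hs hT.le fun t ht =>
      hu T' U hT' hU t ⟨ht.1, ht.2.trans hTT'.le⟩
  · obtain ⟨T', U, hT', hTT', hU⟩ := hlt T hTm
    have h := hv.fc_eq_of_modeSol hε hs hT hm hc (hU.1.restrict hTT'.le)
      (fun k => by rw [hU.2, hv0]) t ht
    have h1 := (hm t ht).eq_eser hs x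
    rw [h, ← hU.1.modeFun_eq, ← hu T' U hT' hU t ⟨ht.1, ht.2.trans hTT'.le⟩] at h1
    exact_mod_cast h1
  · refine or_iff_not_imp_left.2 fun htop M => ?_
    obtain ⟨C, hC, hCs⟩ := exists_wnorm_le_sob (E := ℂ) 3
    obtain ⟨τ, hτ, h⟩ := hloc (C * M).toNNReal
    refine ⟨max 0 (Tmax.toReal - τ / 2), le_max_left _ _, ?_, fun t ht htm => ?_⟩
    · rw [ENNReal.ofReal_lt_iff_lt_toReal (le_max_left _ _) htop]
      exact max_lt (ENNReal.toReal_pos hpos.ne' htop) (by linarith)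
    · by_contra! hM
      obtain ⟨ht0, htτ⟩ := max_lt_iff.1 ht
      obtain ⟨T', U, hT', htT', hU⟩ := hlt t htm
      have hfc : fc (u t) = fun k => U k t := by
        rw [hu T' U hT' hU t ⟨ht0.le, htT'.le⟩]
        exact fc_of_modes (hU.1.sob.wnorm_three hs) (hU.1.modeFun_eq t)
      have hsob : ∀ s' ≤ s, SobSummable s' fun k => U k t := fun s' h' =>
        hU.1.sob.mono h' fun k => (U k).norm_coe_le_norm t
      have hw : wnorm 3 (fun k => U k t) ≤ (C * M).toNNReal := by
        refine (hCs _ (hsob 4 hs)).trans (ENNReal.ofReal_le_ofReal ?_)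
        rw [hsNorm_eq, hfc] at hM
        gcongr
      obtain ⟨V, hV, hV0⟩ := h (fun k => U k t) (fun k => hU.1.herm k t) hw (hsob s le_rfl)
      have hglue := (hU.1.restrict htT'.le).glue hs ht0.le hV hV0
      have h1 := hle (t + τ) ⟨by positivity, _, hglue, fun k => by
        rw [glue_of_le ht0.le, hU.2]⟩
      rw [ENNReal.ofReal_le_iff_le_toReal htop] at h1
      linarith

end MaximalSolution

/-- **Local well-posedness of the parabolic regularized equation.**
For `ε ∈ (0,1]`, `s ≥ 4` and real-valued `φ ∈ H^s(𝕋)` there exist `T > 0` and a unique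
solution `u ∈ C([0,T];H^s(𝕋))` with `u(0) = φ`; moreover the solution extends uniquely to a
maximal interval `[0,Tε)` and either `Tε = ∞` or `liminf_{t→Tε} ‖u(t)‖_{H⁴} = ∞`. -/
theorem lwp_regularized
    (γ0 γ1 γ2 : ℝ) (hγ0 : γ0 ≠ 0)
    (j0 : ℕ) (lam : Fin j0 → ℝ) (a b c d : Fin j0 → ℕ)
    (hp : ∀ j : Fin j0, 2 ≤ a j + b j + c j + d j)
    (ε : ℝ) (hε : ε ∈ Set.Ioc (0:ℝ) 1)
    (s : ℕ) (hs : 4 ≤ s)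
    (φ : ℝ → ℝ) (hφ : MemHs s φ) :
    -- local existence and uniqueness
    (∃ T : ℝ, 0 < T ∧ ∃ u : ℝ → ℝ → ℝ,
      u 0 = φ ∧
      IsSolutionReg ε γ0 γ1 γ2 j0 lam a b c d 0 T u ∧
      (∀ t ∈ Set.Icc (0:ℝ) T, MemHs s (u t)) ∧
      ContInHs s (Set.Icc (0:ℝ) T) u ∧
      (∀ v : ℝ → ℝ → ℝ, v 0 = φ →
        IsSolutionReg ε γ0 γ1 γ2 j0 lam a b c d 0 T v →
        (∀ t ∈ Set.Icc (0:ℝ) T, MemHs s (v t)) →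
        ContInHs s (Set.Icc (0:ℝ) T) v →
        ∀ t ∈ Set.Icc (0:ℝ) T, ∀ x : ℝ, v t x = u t x)) ∧
    -- maximal extension and blow-up alternative
    (∃ Tmax : ENNReal, 0 < Tmax ∧ ∃ u : ℝ → ℝ → ℝ,
      u 0 = φ ∧
      (∀ T : ℝ, 0 < T → ENNReal.ofReal T < Tmax →
        IsSolutionReg ε γ0 γ1 γ2 j0 lam a b c d 0 T u ∧
        (∀ t ∈ Set.Icc (0:ℝ) T, MemHs s (u t)) ∧
        ContInHs s (Set.Icc (0:ℝ) T) u) ∧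
      (∀ v : ℝ → ℝ → ℝ, ∀ T : ℝ, 0 < T → ENNReal.ofReal T < Tmax → v 0 = φ →
        IsSolutionReg ε γ0 γ1 γ2 j0 lam a b c d 0 T v →
        (∀ t ∈ Set.Icc (0:ℝ) T, MemHs s (v t)) →
        ContInHs s (Set.Icc (0:ℝ) T) v →
        ∀ t ∈ Set.Icc (0:ℝ) T, ∀ x : ℝ, v t x = u t x) ∧
      (Tmax = ⊤ ∨ ∀ M : ℝ, ∃ t₀ : ℝ, 0 ≤ t₀ ∧ ENNReal.ofReal t₀ < Tmax ∧
        ∀ t : ℝ, t₀ < t → ENNReal.ofReal t < Tmax → M ≤ hsNorm 4 (u t))) := by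
  have hmax := exists_maximal_solution (γ0 := γ0) (γ1 := γ1) (γ2 := γ2) (lam := lam) (a := a)
    (b := b) (c := c) (d := d) hε.1 hs hφ
  refine ⟨?_, hmax⟩
  obtain ⟨Tmax, hpos, u, hu0, hsol, huniq, -⟩ := hmax
  obtain ⟨T, hT0, hT, hTm⟩ := ENNReal.lt_iff_exists_real_btwn.1 hpos
  have hT' : 0 < T := ENNReal.ofReal_pos.1 hT
  obtain ⟨h1, h2, h3⟩ := hsol T hT' hTm
  exact ⟨T, hT', u, hu0, h1, h2, h3, fun v => huniq v T hT' hTm⟩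

end FifthOrderStmt14
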